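/- arXiv:1003.3852 — 3 statements merged into one kernel-verified Lean document; each statement's English description precedes it below -/
import Mathlib

section
/- (Otto–Villani theorem) Let μ be a Borel probability measure on ℝ^k and C > 0. Suppose μ satisfies the logarithmic Sobolev inequality LS(C): Ent_μ(f²) ≤ C ∫ |∇f|² dμ for every Lipschitz function f : ℝ^k → ℝ (∇f denoting its almost-everywhere defined gradient). Then μ satisfies the transport inequality T₂(C): W₂²(ν,μ) ≤ C H(ν|μ) for all ν ∈ P(ℝ^k), where W₂ is the Wasserstein distance of order 2 for the Euclidean distance. -/
open MeasureTheory ENNReal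

/-- The optimal transport cost `𝒯_c(ν, μ)` associated with the cost function `c`:
the infimum of `∫ c dπ` over all couplings `π` of `ν` and `μ`. -/
noncomputable def optCost {X : Type*} [MeasurableSpace X] (c : X → X → ℝ)
    (ν μ : Measure X) : ℝ≥0∞ :=
  ⨅ (π : Measure (X × X)) (_ : π.map Prod.fst = ν ∧ π.map Prod.snd = μ),
    ∫⁻ p, ENNReal.ofReal (c p.1 p.2) ∂π

open Classical in
/-- The relative entropy `H(ν|μ)`: it equals `∫ h(dν/dμ) dμ` with
`h(t) = t log t - t + 1 ≥ 0` if `ν ≪ μ`, and `+∞` otherwise.  For probability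
measures `ν ≪ μ` this coincides with `∫ log (dν/dμ) dν`. -/
noncomputable def relEntropy {X : Type*} [MeasurableSpace X] (ν μ : Measure X) : ℝ≥0∞ :=
  if ν ≪ μ then
    ∫⁻ x, ENNReal.ofReal ((ν.rnDeriv μ x).toReal * Real.log (ν.rnDeriv μ x).toReal
      - (ν.rnDeriv μ x).toReal + 1) ∂μ
  else ∞

/-- The local Lipschitz constant (slope) `|∇f|(x) = limsup_{y→x} |f(y)−f(x)|/|y−x|`. -/
noncomputable def localSlope {E : Type*} [MetricSpace E] (f : E → ℝ) (x : E) : ℝ :=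
  Filter.limsup (fun y => |f y - f x| / dist y x) (nhdsWithin x {x}ᶜ)


namespace OV

open Filter Topology

section HopfLax

variable {k : ℕ}

local notation "E" => EuclideanSpace ℝ (Fin k)

/-- Hopf-Lax semigroup. -/
noncomputable def HL {k : ℕ} (f : EuclideanSpace ℝ (Fin k) → ℝ) (t : ℝ)
    (x : EuclideanSpace ℝ (Fin k)) : ℝ := ⨅ y, (f y + dist x y ^ 2 / t)

lemma HL_bdd {f : E → ℝ} {B : ℝ} (hB : ∀ x, |f x| ≤ B) {t : ℝ} (ht : 0 < t) (x : E) :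
    BddBelow (Set.range fun y => f y + dist x y ^ 2 / t) := by
  refine ⟨-B, ?_⟩
  rintro _ ⟨y, rfl⟩
  have := (abs_le.1 (hB y)).1
  have h2 : 0 ≤ dist x y ^ 2 / t := by positivity
  simp only; linarith

lemma HL_le {f : E → ℝ} {B : ℝ} (hB : ∀ x, |f x| ≤ B) {t : ℝ} (ht : 0 < t) (x y : E) :
    HL f t x ≤ f y + dist x y ^ 2 / t := ciInf_le (HL_bdd hB ht x) y

lemma HL_le_self {f : E → ℝ} {B : ℝ} (hB : ∀ x, |f x| ≤ B) {t : ℝ} (ht : 0 < t) (x : E) :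
    HL f t x ≤ f x := by
  simpa using HL_le hB ht x x

lemma le_HL {f : E → ℝ} {t a : ℝ} (x : E) (h : ∀ y, a ≤ f y + dist x y ^ 2 / t) :
    a ≤ HL f t x := le_ciInf h

lemma HL_abs {f : E → ℝ} {B : ℝ} (hB : ∀ x, |f x| ≤ B) {t : ℝ} (ht : 0 < t) (x : E) :
    |HL f t x| ≤ B := by
  rw [abs_le]
  constructor
  · refine le_HL x fun y => ?_
    have := (abs_le.1 (hB y)).1
    have h2 : 0 ≤ dist x y ^ 2 / t := by positivity
    linarith
  · exact (HL_le_self hB ht x).trans (abs_le.1 (hB x)).2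

lemma HL_exists {f : E → ℝ} {B : ℝ} (hB : ∀ x, |f x| ≤ B) (hf : Continuous f) {t : ℝ}
    (ht : 0 < t) (x : E) : ∃ y, HL f t x = f y + dist x y ^ 2 / t := by
  have hc : Continuous fun y => f y + dist x y ^ 2 / t := by fun_prop
  obtain ⟨y, hy⟩ := hc.exists_forall_le' x (by
    have : ∀ᶠ y in cocompact E, B + B < dist x y ^ 2 / t := by
      have h1 : Tendsto (fun y : E => dist y x) (cocompact E) atTop := tendsto_dist_right_cocompact_atTop x
      have h2 : Tendsto (fun y : E => dist y x ^ 2 / t) (cocompact E) atTop :=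
        ((tendsto_pow_atTop two_ne_zero).comp h1).atTop_div_const ht
      filter_upwards [h2.eventually_gt_atTop (B + B)] with y hy
      rwa [dist_comm]
    filter_upwards [this] with y hy
    have h1 := (abs_le.1 (hB y)).1
    have h2 := (abs_le.1 (hB x)).2
    simp only [dist_self]
    norm_num
    linarith)
  exact ⟨y, le_antisymm (HL_le hB ht x y) (le_HL x hy)⟩

lemma HL_lip_aux {f : E → ℝ} {B : ℝ} (hB : ∀ x, |f x| ≤ B) {L : NNReal} (hf : LipschitzWith L f)
    {t : ℝ} (ht : 0 < t) (x x' : E) : HL f t x ≤ HL f t x' + L * dist x x' := by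
  obtain ⟨y, hy⟩ := HL_exists hB hf.continuous ht x'
  have h1 := HL_le hB ht x (y + (x - x'))
  have h2 : dist x (y + (x - x')) = dist x' y := by
    rw [dist_eq_norm, dist_eq_norm]; congr 1; abel
  have h3 := hf.dist_le_mul (y + (x - x')) y
  have h4 : dist (y + (x - x')) y = dist x x' := by
    rw [dist_eq_norm, dist_eq_norm]; congr 1; abel
  rw [h2] at h1
  rw [h4, Real.dist_eq] at h3
  have := le_abs_self (f (y + (x - x')) - f y)
  linarith

lemma HL_lip {f : E → ℝ} {B : ℝ} (hB : ∀ x, |f x| ≤ B) {L : NNReal} (hf : LipschitzWith L f)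
    {t : ℝ} (ht : 0 < t) : LipschitzWith L (HL f t) :=
  LipschitzWith.of_le_add_mul L (HL_lip_aux hB hf ht)

/-- time monotonicity with gain. -/
lemma HL_gain {f : E → ℝ} {B : ℝ} (hB : ∀ x, |f x| ≤ B)
    {t s : ℝ} (ht : 0 < t) (hts : t < s) {x y : E} (hy : HL f t x = f y + dist x y ^ 2 / t) :
    dist x y ^ 2 ≤ (HL f t x - HL f s x) * (s * t / (s - t)) := by
  have h1 := HL_le hB (ht.trans hts) x y
  have hs := ht.trans hts
  have hst : 0 < s - t := by linarith
  have h2 : dist x y ^ 2 / t - dist x y ^ 2 / s = dist x y ^ 2 * ((s - t) / (s * t)) := by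
    field_simp
  have h3 : dist x y ^ 2 * ((s - t) / (s * t)) ≤ HL f t x - HL f s x := by linarith
  calc dist x y ^ 2 = (dist x y ^ 2 * ((s - t) / (s * t))) * (s * t / (s - t)) := by field_simp
    _ ≤ _ := by gcongr

lemma HL_mono {f : E → ℝ} {B : ℝ} (hB : ∀ x, |f x| ≤ B) {t s : ℝ} (ht : 0 < t) (hts : t ≤ s)
    (x : E) : HL f s x ≤ HL f t x := by
  refine le_HL x fun y => (HL_le hB (ht.trans_le hts) x y).trans ?_
  gcongr

lemma HL_time {f : E → ℝ} {B : ℝ} (hB : ∀ x, |f x| ≤ B) {L : NNReal} (hf : LipschitzWith L f)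
    {t s : ℝ} (ht : 0 < t) (hts : t ≤ s) (x : E) :
    HL f t x - HL f s x ≤ L ^ 2 * s / t * (s - t) := by
  have hs := ht.trans_le hts
  obtain ⟨y, hy⟩ := HL_exists hB hf.continuous hs x
  have h1 := HL_le hB ht x y
  have h2 := HL_le_self hB hs x
  have h3 := hf.dist_le_mul x y
  rw [Real.dist_eq] at h3
  have h4 := le_abs_self (f x - f y)
  have h5 : dist x y ^ 2 / s ≤ L * dist x y := by linarith
  have h6 : dist x y ≤ L * s := by
    rw [div_le_iff₀ hs] at h5
    rcases (dist_nonneg (x := x) (y := y)).eq_or_lt with h | h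
    · rw [← h]; positivity
    · nlinarith
  have h7 : dist x y ^ 2 / t - dist x y ^ 2 / s = dist x y ^ 2 * ((s - t) / (s * t)) := by
    field_simp
  have h8 : 0 ≤ s - t := by linarith
  have h9 : dist x y ^ 2 * ((s - t) / (s * t)) ≤ (L * s) ^ 2 * ((s - t) / (s * t)) := by gcongr
  have h10 : ((L : ℝ) * s) ^ 2 * ((s - t) / (s * t)) = L ^ 2 * s / t * (s - t) := by field_simp
  linarith

/-- radius function -/
lemma HL_space {f : E → ℝ} {B : ℝ} (hB : ∀ x, |f x| ≤ B) (hf : Continuous f)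
    {t s : ℝ} (ht : 0 < t) (hts : t < s) (x x' : E) :
    HL f t x - HL f t x' ≤
      (2 * √((HL f t x' - HL f s x') * (s * t / (s - t))) + dist x x') / t * dist x x' := by
  obtain ⟨y, hy⟩ := HL_exists hB hf ht x'
  have h0 := Real.le_sqrt_of_sq_le (HL_gain hB ht hts hy)
  set R := √((HL f t x' - HL f s x') * (s * t / (s - t)))
  have h1 := HL_le hB ht x y
  have h2 : dist x y ≤ dist x x' + dist x' y := dist_triangle _ _ _
  have h3 : dist x y ^ 2 ≤ (dist x x' + dist x' y) ^ 2 := by gcongr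
  have h4 : dist x y ^ 2 / t - dist x' y ^ 2 / t ≤ (2 * R + dist x x') * dist x x' / t := by
    rw [← sub_div]
    gcongr
    have := dist_nonneg (x := x) (y := x')
    nlinarith
  have h5 : (2 * R + dist x x') * dist x x' / t = (2 * R + dist x x') / t * dist x x' := by ring
  linarith

lemma localSlope_nonneg' {F : Type*} [MetricSpace F] (f : F → ℝ) (x : F) : 0 ≤ localSlope f x := by
  unfold localSlope
  rw [limsup_eq]
  rcases eq_or_neBot (𝓝[≠] x) with h | h
  · rw [h]; simp
  · refine Real.sInf_nonneg ?_
    rintro a ha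
    obtain ⟨y, hy⟩ := Eventually.exists (f := 𝓝[≠] x) ha
    exact le_trans (by positivity) hy

lemma localSlope_le {F : Type*} [MetricSpace F] (f w : F → ℝ) (x : F) (hw : ContinuousAt w x)
    (hw0 : 0 ≤ w x)
    (h : ∀ y, |f y - f x| ≤ w y * dist y x) : localSlope f x ≤ w x := by
  unfold localSlope
  rcases eq_or_neBot (𝓝[≠] x) with h' | h'
  · rw [h', limsup_eq]; simpa using hw0
  · have hT : Tendsto w (𝓝[≠] x) (𝓝 (w x)) := hw.tendsto.mono_left nhdsWithin_le_nhds
    rw [← hT.limsup_eq]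
    refine limsup_le_limsup ?_ ?_ hT.isBoundedUnder_le
    · filter_upwards [self_mem_nhdsWithin] with y hy
      have : 0 < dist y x := dist_pos.2 hy
      rw [div_le_iff₀ this]
      exact h y
    · exact isCoboundedUnder_le_of_le _ (x := 0) (fun y => by positivity)

lemma exp_diff (p q : ℝ) : |Real.exp p - Real.exp q| ≤ max (Real.exp p) (Real.exp q) * |p - q| := by
  wlog h : q ≤ p generalizing p q
  · rw [abs_sub_comm, abs_sub_comm p, max_comm]
    exact this q p (by linarith)
  · have h1 : Real.exp q ≤ Real.exp p := Real.exp_le_exp.2 h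
    rw [abs_of_nonneg (by linarith), abs_of_nonneg (by linarith), max_eq_left h1]
    have h2 := Real.add_one_le_exp (q - p)
    have h3 : Real.exp q = Real.exp p * Real.exp (q - p) := by rw [← Real.exp_add]; congr 1; ring
    have := Real.exp_pos p
    nlinarith

lemma slope_bound {f : E → ℝ} {B : ℝ} (hB : ∀ x, |f x| ≤ B) {L : NNReal} (hf : LipschitzWith L f)
    {t s : ℝ} (ht : 0 < t) (hts : t < s) {a : ℝ} (ha : 0 ≤ a) (x : E) :
    localSlope (fun x => Real.exp (a * HL f t x)) x ^ 2 ≤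
      4 * a ^ 2 * (s / (t * (s - t))) * ((HL f t x - HL f s x) * Real.exp (2 * a * HL f t x)) := by
  have hs := ht.trans hts
  have hst : 0 < s - t := by linarith
  set R : E → ℝ := fun x => √((HL f t x - HL f s x) * (s * t / (s - t))) with hR
  have hc1 : Continuous (HL f t) := (HL_lip hB hf ht).continuous
  have hc2 : Continuous (HL f s) := (HL_lip hB hf hs).continuous
  have hRc : Continuous R := by fun_prop
  have hR0 : ∀ x, 0 ≤ R x := fun x => Real.sqrt_nonneg _
  set w : E → ℝ := fun y => max (Real.exp (a * HL f t y)) (Real.exp (a * HL f t x)) *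
    (a * ((2 * max (R y) (R x) + dist y x) / t)) with hw
  have hwc : Continuous w := by fun_prop
  have hwx : w x = Real.exp (a * HL f t x) * (a * (2 * R x / t)) := by simp [hw]
  have key := localSlope_le (fun x => Real.exp (a * HL f t x)) w x hwc.continuousAt
    (by rw [hwx]; have := hR0 x; positivity) (by
      intro y
      refine (exp_diff _ _).trans ?_
      rw [hw]
      simp only
      rw [mul_assoc]
      refine mul_le_mul_of_nonneg_left ?_ (by positivity)
      rw [← mul_sub, abs_mul, abs_of_nonneg ha, mul_assoc]
      refine mul_le_mul_of_nonneg_left ?_ ha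
      rw [abs_le']
      constructor
      · refine (HL_space hB hf.continuous ht hts y x).trans ?_
        gcongr
        exact le_max_right (R y) (R x)
      · rw [neg_sub]
        refine (HL_space hB hf.continuous ht hts x y).trans ?_
        rw [dist_comm x y]
        gcongr
        exact le_max_left (R y) (R x))
  have h0 := localSlope_nonneg' (fun x => Real.exp (a * HL f t x)) x
  calc _ ≤ w x ^ 2 := by gcongr
    _ = Real.exp (a * HL f t x) ^ 2 * (a ^ 2 * (4 * R x ^ 2 / t ^ 2)) := by rw [hwx]; ring
    _ = _ := by
      have : R x ^ 2 = (HL f t x - HL f s x) * (s * t / (s - t)) := by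
        refine Real.sq_sqrt ?_
        have := HL_mono hB ht hts.le x
        have : 0 ≤ HL f t x - HL f s x := by linarith
        positivity
      rw [this, ← Real.exp_nat_mul]
      push_cast
      rw [show 2 * (a * HL f t x) = 2 * a * HL f t x by ring]
      field_simp

end HopfLax

section BGL

variable {k : ℕ}

local notation "E" => EuclideanSpace ℝ (Fin k)

/-- bounded continuous -/
def CB {X : Type*} [TopologicalSpace X] (g : X → ℝ) : Prop := Continuous g ∧ ∃ c, ∀ x, |g x| ≤ c

lemma CB.mul {X : Type*} [TopologicalSpace X] {f g : X → ℝ} (hf : CB f) (hg : CB g) :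
    CB (fun x => f x * g x) := by
  obtain ⟨hf, c, hc⟩ := hf
  obtain ⟨hg, d, hd⟩ := hg
  refine ⟨hf.mul hg, c * d, fun x => ?_⟩
  rw [abs_mul]
  exact mul_le_mul (hc x) (hd x) (abs_nonneg _) ((abs_nonneg _).trans (hc x))

lemma CB.sub {X : Type*} [TopologicalSpace X] {f g : X → ℝ} (hf : CB f) (hg : CB g) :
    CB (fun x => f x - g x) := by
  obtain ⟨hf, c, hc⟩ := hf
  obtain ⟨hg, d, hd⟩ := hg
  exact ⟨hf.sub hg, c + d, fun x => (abs_sub _ _).trans (add_le_add (hc x) (hd x))⟩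

lemma CB.add {X : Type*} [TopologicalSpace X] {f g : X → ℝ} (hf : CB f) (hg : CB g) :
    CB (fun x => f x + g x) := by
  obtain ⟨hf, c, hc⟩ := hf
  obtain ⟨hg, d, hd⟩ := hg
  exact ⟨hf.add hg, c + d, fun x => (abs_add_le _ _).trans (add_le_add (hc x) (hd x))⟩

lemma CB.const {X : Type*} [TopologicalSpace X] (a : ℝ) : CB (fun _ : X => a) :=
  ⟨continuous_const, |a|, fun _ => le_rfl⟩

lemma CB.exp {X : Type*} [TopologicalSpace X] {f : X → ℝ} (hf : CB f) :
    CB (fun x => Real.exp (f x)) := by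
  obtain ⟨hf, c, hc⟩ := hf
  refine ⟨Real.continuous_exp.comp hf, Real.exp c, fun x => ?_⟩
  rw [abs_of_pos (Real.exp_pos _)]
  exact Real.exp_le_exp.2 ((le_abs_self _).trans (hc x))

lemma CB.int {X : Type*} [TopologicalSpace X] [MeasurableSpace X] [OpensMeasurableSpace X]
    {f : X → ℝ} (hf : CB f) (μ : Measure X) [IsFiniteMeasure μ] : Integrable f μ := by
  obtain ⟨hf, c, hc⟩ := hf
  exact Integrable.of_bound hf.measurable.aestronglyMeasurable c (ae_of_all _ hc)

lemma CB.HL {f : E → ℝ} {B : ℝ} (hB : ∀ x, |f x| ≤ B) {L : NNReal} (hf : LipschitzWith L f)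
    {t : ℝ} (ht : 0 < t) : CB (HL f t) := ⟨(HL_lip hB hf ht).continuous, B, HL_abs hB ht⟩

/-- log-Sobolev hypothesis -/
def LS (C : ℝ) (μ : Measure E) : Prop := ∀ f : E → ℝ, (∃ L : NNReal, LipschitzWith L f) →
      ∫ x, f x ^ 2 * Real.log (f x ^ 2) ∂μ -
          (∫ x, f x ^ 2 ∂μ) * Real.log (∫ x, f x ^ 2 ∂μ) ≤
        C * ∫ x, localSlope f x ^ 2 ∂μ

lemma exp_lip {g : E → ℝ} {c : ℝ} (hc : ∀ x, |g x| ≤ c) {L : NNReal} (hg : LipschitzWith L g)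
    {a : ℝ} (ha : 0 ≤ a) : ∃ L' : NNReal, LipschitzWith L' (fun x => Real.exp (a * g x)) := by
  refine ⟨Real.toNNReal (Real.exp (a * c) * (a * L)), LipschitzWith.of_dist_le_mul fun x y => ?_⟩
  rw [Real.dist_eq]
  refine (exp_diff _ _).trans ?_
  have h1 : ∀ x, Real.exp (a * g x) ≤ Real.exp (a * c) := fun x =>
    Real.exp_le_exp.2 (mul_le_mul_of_nonneg_left ((le_abs_self _).trans (hc x)) ha)
  have h2 : |g x - g y| ≤ L * dist x y := by
    have := hg.dist_le_mul x y
    rwa [Real.dist_eq] at this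
  rw [← mul_sub, abs_mul, abs_of_nonneg ha]
  calc _ ≤ Real.exp (a * c) * (a * (L * dist x y)) := by
        gcongr
        exact max_le (h1 x) (h1 y)
    _ = _ := by rw [Real.coe_toNNReal _ (by positivity)]; ring

lemma ent_bound {C : ℝ} (hC : 0 < C) {μ : Measure E} [IsProbabilityMeasure μ] (hLS : LS C μ)
    {f : E → ℝ} {B : ℝ} (hB : ∀ x, |f x| ≤ B) {L : NNReal} (hf : LipschitzWith L f)
    {t s : ℝ} (ht : 0 < t) (hts : t < s) :
    ∫ x, Real.exp (t / C * HL f t x) * (t / C * HL f t x) ∂μ -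
      (∫ x, Real.exp (t / C * HL f t x) ∂μ) * Real.log (∫ x, Real.exp (t / C * HL f t x) ∂μ) ≤
    t * s / (C * (s - t)) * ∫ x, (HL f t x - HL f s x) * Real.exp (t / C * HL f t x) ∂μ := by
  have ha : 0 ≤ t / C / 2 := by positivity
  have hs := ht.trans hts
  have hst : 0 < s - t := by linarith
  have h := hLS (fun x => Real.exp (t / C / 2 * HL f t x))
    (exp_lip (HL_abs hB ht) (HL_lip hB hf ht) ha)
  have e : ∀ x, Real.exp (t / C / 2 * HL f t x) ^ 2 = Real.exp (t / C * HL f t x) := by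
    intro x
    rw [← Real.exp_nat_mul]; congr 1; push_cast; ring
  simp only [e, Real.log_exp] at h
  refine h.trans ?_
  have hI : CB (fun x => (HL f t x - HL f s x) * Real.exp (t / C * HL f t x)) :=
    ((CB.HL hB hf ht).sub (CB.HL hB hf hs)).mul ((CB.const _).mul (CB.HL hB hf ht)).exp
  have h2 : ∫ x, localSlope (fun x => Real.exp (t / C / 2 * HL f t x)) x ^ 2 ∂μ ≤
      ∫ x, 4 * (t / C / 2) ^ 2 * (s / (t * (s - t))) * ((HL f t x - HL f s x) * Real.exp (t / C * HL f t x)) ∂μ := by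
    refine integral_mono_of_nonneg (ae_of_all _ fun x => sq_nonneg _) ((hI.int μ).const_mul _)
      (ae_of_all _ fun x => ?_)
    have := slope_bound hB hf ht hts ha x
    rw [show 2 * (t / C / 2) = t / C by ring] at this
    exact this
  rw [integral_const_mul] at h2
  calc _ ≤ C * (4 * (t / C / 2) ^ 2 * (s / (t * (s - t))) *
        ∫ x, (HL f t x - HL f s x) * Real.exp (t / C * HL f t x) ∂μ) := by gcongr
    _ = _ := by field_simp; norm_num

lemma Z_step {C : ℝ} (hC : 0 < C) {μ : Measure E} [IsProbabilityMeasure μ] (hLS : LS C μ)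
    {f : E → ℝ} {B : ℝ} (hB : ∀ x, |f x| ≤ B) {L : NNReal} (hf : LipschitzWith L f)
    {t s K : ℝ} (ht : 0 < t) (hts : t < s)
    (hK : ∀ x, |s / C * HL f s x - t / C * HL f t x| ≤ K * (s - t)) (hK1 : K * (s - t) ≤ 1) :
    Real.log (∫ x, Real.exp (s / C * HL f s x) ∂μ) ≤
      s / t * Real.log (∫ x, Real.exp (t / C * HL f t x) ∂μ) + K ^ 2 * (s - t) ^ 2 := by
  have hs := ht.trans hts
  have hst : 0 < s - t := by linarith
  have hQt := CB.HL hB hf ht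
  have hQs := CB.HL hB hf hs
  have hEt := ((CB.const (t / C)).mul hQt).exp
  have hEs := ((CB.const (s / C)).mul hQs).exp
  have hent := ent_bound hC hLS hB hf ht hts
  have Zpos : ∀ g : E → ℝ, CB g → 0 < ∫ x, Real.exp (g x) ∂μ := fun g hg =>
    integral_exp_pos (hg.exp.int μ)
  have hZt := Zpos _ ((CB.const (t / C)).mul hQt)
  have hZs := Zpos _ ((CB.const (s / C)).mul hQs)
  set Zt := ∫ x, Real.exp (t / C * HL f t x) ∂μ
  set Zs := ∫ x, Real.exp (s / C * HL f s x) ∂μ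
  have hd := (hQt.sub hQs).mul hEt
  have hq := hEt.mul ((CB.const (t / C)).mul hQt)
  set A := ∫ x, (HL f t x - HL f s x) * Real.exp (t / C * HL f t x) ∂μ
  set D := ∫ x, Real.exp (t / C * HL f t x) * (t / C * HL f t x) ∂μ
  have h1 : Zs ≤ Zt * (1 + K ^ 2 * (s - t) ^ 2) + (-(s / C) * A + (s - t) / t * D) := by
    have : Zt * (1 + K ^ 2 * (s - t) ^ 2) + (-(s / C) * A + (s - t) / t * D) =
      ∫ x, (Real.exp (t / C * HL f t x) * (1 + K ^ 2 * (s - t) ^ 2) +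
        (-(s / C) * ((HL f t x - HL f s x) * Real.exp (t / C * HL f t x)) +
          (s - t) / t * (Real.exp (t / C * HL f t x) * (t / C * HL f t x)))) ∂μ := by
      rw [integral_add ((hEt.int μ).mul_const _)
        ((((CB.const _).mul hd).add ((CB.const _).mul hq)).int μ),
        integral_add ((hd.int μ).const_mul _) ((hq.int μ).const_mul _),
        integral_mul_const, integral_const_mul, integral_const_mul]
    rw [this]
    refine integral_mono (hEs.int μ) (((hEt.int μ).mul_const _).add
        (((hd.int μ).const_mul _).add ((hq.int μ).const_mul _))) fun x => ?_
    have hδ := hK x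
    set δ := s / C * HL f s x - t / C * HL f t x with hδd
    have h3 := Real.abs_exp_sub_one_sub_id_le (hδ.trans hK1)
    have h4 := (abs_le.1 h3).2
    have h5 : δ ^ 2 ≤ (K * (s - t)) ^ 2 := by
      rw [← sq_abs]; gcongr
    have h6 : Real.exp (s / C * HL f s x) = Real.exp (t / C * HL f t x) * Real.exp δ := by
      rw [← Real.exp_add]; congr 1; rw [hδd]; ring
    have h7 := Real.exp_pos (t / C * HL f t x)
    simp only
    rw [h6]
    have h8 : Real.exp (t / C * HL f t x) * Real.exp δ ≤
      Real.exp (t / C * HL f t x) * (1 + K ^ 2 * (s - t) ^ 2 + δ) := by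
        gcongr; linarith
    refine h8.trans (le_of_eq ?_)
    rw [hδd]
    field_simp
    ring
  have h2 : -(s / C) * A + (s - t) / t * D ≤ (s - t) / t * (Zt * Real.log Zt) := by
    have : (s - t) / t * (D - Zt * Real.log Zt) ≤ (s - t) / t * (t * s / (C * (s - t)) * A) := by
      gcongr
    have e : (s - t) / t * (t * s / (C * (s - t)) * A) = s / C * A := by field_simp
    linarith
  have h3 : Zs / Zt ≤ 1 + K ^ 2 * (s - t) ^ 2 + (s - t) / t * Real.log Zt := by
    rw [div_le_iff₀ hZt]; nlinarith
  have h4 := Real.log_le_sub_one_of_pos (div_pos hZs hZt)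
  rw [Real.log_div hZs.ne' hZt.ne'] at h4
  have h5 : s / t * Real.log Zt = Real.log Zt + (s - t) / t * Real.log Zt := by field_simp; ring
  linarith

lemma F_mono {C : ℝ} (hC : 0 < C) {μ : Measure E} [IsProbabilityMeasure μ] (hLS : LS C μ)
    {f : E → ℝ} {B : ℝ} (hB : ∀ x, |f x| ≤ B) {L : NNReal} (hf : LipschitzWith L f)
    {t₀ : ℝ} (ht₀ : 0 < t₀) (ht1 : t₀ < 1) :
    Real.log (∫ x, Real.exp (1 / C * HL f 1 x) ∂μ) ≤
      1 / t₀ * Real.log (∫ x, Real.exp (t₀ / C * HL f t₀ x) ∂μ) := by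
  have hB0 : 0 ≤ B := (abs_nonneg _).trans (hB 0)
  set K := (L ^ 2 / t₀ + B) / C with hKdef
  have hK0 : 0 ≤ K := by positivity
  set G : ℝ → ℝ := fun t => 1 / t * Real.log (∫ x, Real.exp (t / C * HL f t x) ∂μ) with hG
  have hδ : ∀ t s, t₀ ≤ t → t < s → s ≤ 1 → ∀ x,
      |s / C * HL f s x - t / C * HL f t x| ≤ K * (s - t) := by
    intro t s h1 h2 h3 x
    have ht : 0 < t := by linarith
    have e : s / C * HL f s x - t / C * HL f t x =
      ((s - t) * HL f s x - t * (HL f t x - HL f s x)) / C := by ring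
    rw [e, abs_div, abs_of_pos hC, hKdef, div_mul_eq_mul_div]
    gcongr
    have ha := HL_abs hB (ht.trans h2) x
    have hb := HL_time hB hf ht h2.le x
    have hc := HL_mono hB ht h2.le x
    have hst : 0 < s - t := by linarith
    have h4 : |(s - t) * HL f s x| ≤ (s - t) * B := by
      rw [abs_mul, abs_of_pos hst]; gcongr
    have h5 : |t * (HL f t x - HL f s x)| ≤ L ^ 2 / t₀ * (s - t) := by
      rw [abs_mul, abs_of_pos ht, abs_of_nonneg (by linarith)]
      calc t * (HL f t x - HL f s x) ≤ t * (L ^ 2 * s / t * (s - t)) := by gcongr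
        _ = L ^ 2 * s * (s - t) := by field_simp
        _ ≤ L ^ 2 * 1 * (s - t) := by gcongr
        _ ≤ L ^ 2 * (1 / t₀) * (s - t) := by
          gcongr
          rw [le_div_iff₀ ht₀]; linarith
        _ = _ := by ring
    refine (abs_sub _ _).trans ?_
    linarith
  have hstep : ∀ t s, t₀ ≤ t → t < s → s ≤ 1 → K * (s - t) ≤ 1 →
      G s ≤ G t + K ^ 2 / t₀ * (s - t) ^ 2 := by
    intro t s h1 h2 h3 h4
    have ht : 0 < t := by linarith
    have hs : 0 < s := by linarith
    have := Z_step hC hLS hB hf ht h2 (hδ t s h1 h2 h3) h4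
    have h5 : G s ≤ 1 / s * (s / t * Real.log (∫ x, Real.exp (t / C * HL f t x) ∂μ) +
      K ^ 2 * (s - t) ^ 2) := by
      simp only [hG]; gcongr
    refine h5.trans ?_
    rw [mul_add]
    refine add_le_add (le_of_eq ?_) ?_
    · simp only [hG]; field_simp
    · have : 1 / s ≤ 1 / t₀ := one_div_le_one_div_of_le ht₀ (by linarith)
      calc 1 / s * (K ^ 2 * (s - t) ^ 2) ≤ 1 / t₀ * (K ^ 2 * (s - t) ^ 2) := by gcongr
        _ = _ := by ring
  have hn : ∀ n : ℕ, 0 < n → K ≤ n → G 1 ≤ G t₀ + K ^ 2 / t₀ * (1 / (n : ℝ)) := by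
    intro n hn hKn
    have hn' : (0 : ℝ) < n := by exact_mod_cast hn
    set h := (1 - t₀) / n with hh
    have hhpos : 0 < h := div_pos (by linarith) hn'
    have hnh : n * h = 1 - t₀ := by rw [hh]; field_simp
    have hle : h ≤ 1 / n := by rw [hh]; gcongr; linarith
    have hind : ∀ j : ℕ, j ≤ n → G (t₀ + j * h) ≤ G t₀ + j * (K ^ 2 / t₀ * h ^ 2) := by
      intro j
      induction j with
      | zero => simp
      | succ j ih =>
        intro hj
        have ih := ih (by omega)
        have hj' : ((j : ℝ) + 1) ≤ n := by exact_mod_cast hj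
        have := hstep (t₀ + j * h) (t₀ + (j + 1 : ℕ) * h) (by nlinarith [(Nat.cast_nonneg j : (0:ℝ) ≤ j)])
          (by push_cast; linarith) (by push_cast; nlinarith) (by
            have e : t₀ + ((j + 1 : ℕ) : ℝ) * h - (t₀ + j * h) = h := by push_cast; ring
            rw [e]
            calc K * h ≤ n * (1 / n) := by gcongr
              _ = 1 := by field_simp)
        have e : t₀ + ((j + 1 : ℕ) : ℝ) * h - (t₀ + j * h) = h := by push_cast; ring
        rw [e] at this
        push_cast at this ⊢
        linarith
    have := hind n le_rfl
    rw [hnh] at this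
    rw [show t₀ + (1 - t₀) = 1 by ring] at this
    refine this.trans ?_
    refine add_le_add le_rfl ?_
    calc (n : ℝ) * (K ^ 2 / t₀ * h ^ 2) ≤ n * (K ^ 2 / t₀ * (1 / n) ^ 2) := by gcongr
      _ = _ := by field_simp
  have hlim : Tendsto (fun n : ℕ => G t₀ + K ^ 2 / t₀ * (1 / (n : ℝ))) atTop
      (𝓝 (G t₀ + K ^ 2 / t₀ * 0)) :=
    (tendsto_const_nhds.mul tendsto_one_div_atTop_nhds_zero_nat).const_add _
  have := ge_of_tendsto hlim (by
    obtain ⟨N, hN⟩ := exists_nat_ge K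
    filter_upwards [eventually_ge_atTop (N + 1)] with n hn'
    refine hn n (by omega) (hN.trans ?_)
    exact_mod_cast (by omega : N ≤ n))
  simpa [hG] using this

/-- Bobkov-Gentil-Ledoux. -/
lemma bgl {C : ℝ} (hC : 0 < C) {μ : Measure E} [IsProbabilityMeasure μ] (hLS : LS C μ)
    {f : E → ℝ} {B : ℝ} (hB : ∀ x, |f x| ≤ B) {L : NNReal} (hf : LipschitzWith L f) :
    Real.log (∫ x, Real.exp (1 / C * HL f 1 x) ∂μ) ≤ 1 / C * ∫ x, f x ∂μ := by
  have hB0 : 0 ≤ B := (abs_nonneg _).trans (hB 0)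
  have hfc : CB f := ⟨hf.continuous, B, hB⟩
  have key : ∀ t, 0 < t → t < 1 → t / C * B ≤ 1 →
      Real.log (∫ x, Real.exp (1 / C * HL f 1 x) ∂μ) ≤ 1 / C * ∫ x, f x ∂μ + t * (B / C) ^ 2 := by
    intro t ht ht1 htB
    refine (F_mono hC hLS hB hf ht ht1).trans ?_
    have hCB := ((CB.const (t / C)).mul (CB.HL hB hf ht)).exp
    have hpos : 0 < ∫ x, Real.exp (t / C * HL f t x) ∂μ := integral_exp_pos (hCB.int μ)
    have h1 : ∫ x, Real.exp (t / C * HL f t x) ∂μ ≤ 1 + (t / C * ∫ x, f x ∂μ) + (t / C * B) ^ 2 := by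
      have e : 1 + (t / C * ∫ x, f x ∂μ) + (t / C * B) ^ 2 = ∫ x, (1 + t / C * f x + (t / C * B) ^ 2) ∂μ := by
        rw [integral_add (((CB.const _).add ((CB.const _).mul hfc)).int μ) (integrable_const _),
          integral_add (integrable_const _) ((hfc.int μ).const_mul _), integral_const_mul]
        simp
      rw [e]
      refine integral_mono (hCB.int μ) (((integrable_const _).add ((hfc.int μ).const_mul _)).add
        (integrable_const _)) fun x => ?_
      have htC : 0 < t / C := by positivity
      have h2 : |t / C * f x| ≤ t / C * B := by
        rw [abs_mul, abs_of_pos htC]; gcongr; exact hB x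
      have h3 := (abs_le.1 (Real.abs_exp_sub_one_sub_id_le (h2.trans htB))).2
      have h4 : (t / C * f x) ^ 2 ≤ (t / C * B) ^ 2 := by rw [← sq_abs]; gcongr
      have h5 : Real.exp (t / C * HL f t x) ≤ Real.exp (t / C * f x) := by
        gcongr; exact HL_le_self hB ht x
      simp only
      linarith
    have h2 := Real.log_le_sub_one_of_pos hpos
    calc _ ≤ 1 / t * ((t / C * ∫ x, f x ∂μ) + (t / C * B) ^ 2) := by gcongr; linarith
      _ = _ := by field_simp
  have hlim : Tendsto (fun t : ℝ => 1 / C * ∫ x, f x ∂μ + t * (B / C) ^ 2) (𝓝[>] 0)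
      (𝓝 (1 / C * ∫ x, f x ∂μ + 0 * (B / C) ^ 2)) :=
    (Continuous.tendsto (by fun_prop) 0).mono_left nhdsWithin_le_nhds
  have hlim2 : Tendsto (fun t : ℝ => t / C * B) (𝓝[>] 0) (𝓝 (0 / C * B)) :=
    (Continuous.tendsto (by fun_prop) 0).mono_left nhdsWithin_le_nhds
  have := ge_of_tendsto hlim (by
    have h1 : ∀ᶠ t : ℝ in 𝓝[>] 0, t / C * B < 1 := hlim2.eventually_lt_const (by simp)
    have h2 : ∀ᶠ t : ℝ in 𝓝[>] 0, t < 1 := nhdsWithin_le_nhds (eventually_lt_nhds one_pos)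
    filter_upwards [h1, h2, self_mem_nhdsWithin] with t a b c
    exact key t c b a.le)
  simpa using this

end BGL

section Entropy

variable {k : ℕ}

local notation "E" => EuclideanSpace ℝ (Fin k)

lemma young (r p : ℝ) (hr : 0 ≤ r) : r * p ≤ (r * Real.log r - r + 1) - 1 + Real.exp p := by
  rcases hr.eq_or_lt with h | h
  · rw [← h]; simp; positivity
  · have h1 := Real.add_one_le_exp (p - Real.log r)
    have h2 : Real.exp p = r * Real.exp (p - Real.log r) := by
      rw [Real.exp_sub, Real.exp_log h]; field_simp
    rw [h2]
    nlinarith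

lemma entropy_ineq {X : Type*} [MeasurableSpace X] {μ ν : Measure X} [IsProbabilityMeasure μ]
    [IsProbabilityMeasure ν] (hac : ν ≪ μ)
    (hH : relEntropy ν μ ≠ ∞) {φ : X → ℝ} (hφm : Measurable φ) {B : ℝ} (hφ : ∀ x, |φ x| ≤ B)
    (h1 : ∫ x, Real.exp (φ x) ∂μ ≤ 1) : ∫ x, φ x ∂ν ≤ (relEntropy ν μ).toReal := by
  have hφi : Integrable φ ν := Integrable.of_bound hφm.aestronglyMeasurable B (ae_of_all _ hφ)
  have hei : Integrable (fun x => Real.exp (φ x)) μ :=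
    Integrable.of_bound (Real.measurable_exp.comp hφm).aestronglyMeasurable (Real.exp B)
      (ae_of_all _ fun x => by
        rw [Real.norm_eq_abs, abs_of_pos (Real.exp_pos _)]
        exact Real.exp_le_exp.2 ((le_abs_self _).trans (hφ x)))
  unfold relEntropy at hH ⊢
  rw [if_pos hac] at hH ⊢
  set r : X → ℝ := fun x => (ν.rnDeriv μ x).toReal with hr
  have hrm : Measurable r := (Measure.measurable_rnDeriv ν μ).ennreal_toReal
  set g : X → ℝ := fun x => r x * Real.log (r x) - r x + 1 with hg
  have hgm : Measurable g := by
    exact ((hrm.mul (Real.measurable_log.comp hrm)).sub hrm).add_const _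
  have hr0 : ∀ x, 0 ≤ r x := fun x => ENNReal.toReal_nonneg
  have hg0 : ∀ x, 0 ≤ g x := fun x => by
    have := young (r x) 0 (hr0 x)
    simp at this
    simp only [hg]; linarith
  have hgi : Integrable g μ := by
    refine ⟨hgm.aestronglyMeasurable, ?_⟩
    rw [hasFiniteIntegral_iff_ofReal (ae_of_all _ hg0)]
    exact lt_top_iff_ne_top.2 hH
  have hge : ∫ x, g x ∂μ = (∫⁻ x, ENNReal.ofReal (g x) ∂μ).toReal :=
    integral_eq_lintegral_of_nonneg_ae (ae_of_all _ hg0) hgm.aestronglyMeasurable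
  change _ ≤ (∫⁻ x, ENNReal.ofReal (g x) ∂μ).toReal
  rw [← hge, ← integral_rnDeriv_smul hac]
  have hi : Integrable (fun x => (ν.rnDeriv μ x).toReal • φ x) μ :=
    (integrable_rnDeriv_smul_iff hac).2 hφi
  calc ∫ x, (ν.rnDeriv μ x).toReal • φ x ∂μ ≤ ∫ x, (g x - 1 + Real.exp (φ x)) ∂μ := by
        refine integral_mono hi ((hgi.sub (integrable_const _)).add hei) fun x => ?_
        exact young (r x) (φ x) (hr0 x)
    _ = ∫ x, g x ∂μ - 1 + ∫ x, Real.exp (φ x) ∂μ := by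
        rw [integral_add (by exact hgi.sub (integrable_const _)) hei,
          integral_sub hgi (integrable_const _)]
        simp
    _ ≤ _ := by linarith

/-- truncated distance -/
noncomputable def dM (M : ℝ) {X : Type*} [MetricSpace X] (x y : X) : ℝ := min (dist x y) M

section dM
variable {X : Type*} [MetricSpace X] {M : ℝ}

lemma dM_nonneg (hM : 0 < M) (x y : X) : 0 ≤ dM M x y := le_min dist_nonneg hM.le
lemma dM_le (x y : X) : dM M x y ≤ M := min_le_right _ _
lemma dM_le_dist (x y : X) : dM M x y ≤ dist x y := min_le_left _ _
lemma dM_comm (x y : X) : dM M x y = dM M y x := by unfold dM; rw [dist_comm]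
lemma dM_self (hM : 0 < M) (x : X) : dM M x x = 0 := by unfold dM; simp [hM.le]
lemma dM_tri (hM : 0 < M) (x y z : X) : dM M x z ≤ dM M x y + dM M y z := by
  have h := dist_triangle x y z
  have h1 := dist_nonneg (x := x) (y := y)
  have h2 := dist_nonneg (x := y) (y := z)
  unfold dM
  rcases le_total (dist x y) M with a | a <;> rcases le_total (dist y z) M with b | b <;>
    simp only [min_eq_left a, min_eq_right a, min_eq_left b, min_eq_right b]
  · exact (min_le_left _ _).trans h
  · exact (min_le_right _ _).trans (by linarith)
  · exact (min_le_right _ _).trans (by linarith)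
  · exact (min_le_right _ _).trans (by linarith)

lemma dM_cont : Continuous fun p : X × X => dM M p.1 p.2 := by unfold dM; fun_prop

lemma cM_diff (hM : 0 < M) (x y x' y' : X) :
    dM M x y ^ 2 ≤ dM M x' y' ^ 2 + 2 * M * (dM M x x' + dM M y y') := by
  have h1 := dM_tri hM x x' y
  have h2 := dM_tri hM x' y' y
  rw [dM_comm y' y] at h2
  have a := dM_nonneg hM x y
  have b := dM_nonneg hM x' y'
  have a' := dM_le (M := M) x y
  have b' := dM_le (M := M) x' y'
  have c := dM_nonneg hM x x'
  have d := dM_nonneg hM y y'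
  rcases le_total (dM M x y) (dM M x' y') with h | h
  · have : dM M x y ^ 2 ≤ dM M x' y' ^ 2 := by gcongr
    have : 0 ≤ 2 * M * (dM M x x' + dM M y y') := by positivity
    linarith
  · have h3 : dM M x y - dM M x' y' ≤ dM M x x' + dM M y y' := by linarith
    have h4 : (dM M x y - dM M x' y') * (dM M x y + dM M x' y') ≤
      (dM M x x' + dM M y y') * (2 * M) := by
      apply mul_le_mul h3 (by linarith) (by positivity) (by positivity)
    nlinarith

end dM

lemma dual_bound {C : ℝ} (hC : 0 < C) {μ ν : Measure E} [IsProbabilityMeasure μ]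
    [IsProbabilityMeasure ν] (hLS : LS C μ) (hac : ν ≪ μ) (hH : relEntropy ν μ ≠ ∞)
    {M : ℝ} (hM : 0 < M) {u v : E → ℝ} (hu : Measurable u) (hv : Measurable v)
    {B B' : ℝ} (hBu : ∀ x, |u x| ≤ B) (hBv : ∀ x, |v x| ≤ B')
    (huv : ∀ x y, u x + v y ≤ dM M x y ^ 2) :
    ∫ x, u x ∂ν + ∫ y, v y ∂μ ≤ C * (relEntropy ν μ).toReal := by
  set f : E → ℝ := fun y => ⨆ x, (u x - dM M x y ^ 2) with hf
  have hbdd : ∀ y, BddAbove (Set.range fun x => u x - dM M x y ^ 2) := fun y => by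
    refine ⟨B, ?_⟩
    rintro _ ⟨x, rfl⟩
    have := (abs_le.1 (hBu x)).2
    simp only; nlinarith [sq_nonneg (dM M x y)]
  have hle : ∀ x y, u x - dM M x y ^ 2 ≤ f y := fun x y => le_ciSup (hbdd y) x
  have hfv : ∀ y, f y ≤ - v y := fun y => ciSup_le fun x => by have := huv x y; linarith
  have hfB : ∀ y, |f y| ≤ B := fun y => by
    rw [abs_le]
    constructor
    · have h1 := hle y y
      rw [dM_self hM] at h1
      have := (abs_le.1 (hBu y)).1
      linarith
    · exact ciSup_le fun x => by
        have := (abs_le.1 (hBu x)).2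
        nlinarith [sq_nonneg (dM M x y)]
  have hfL : LipschitzWith (Real.toNNReal (2 * M)) f := by
    refine LipschitzWith.of_le_add_mul _ fun y y' => ciSup_le fun x => ?_
    rw [Real.coe_toNNReal _ (by positivity)]
    have h1 := hle x y'
    have h2 := cM_diff hM x y' x y
    rw [dM_self hM, zero_add] at h2
    have h3 := dM_le_dist (M := M) y' y
    rw [dist_comm] at h3
    have : 2 * M * dM M y' y ≤ 2 * M * dist y y' := by gcongr
    linarith
  have huQ : ∀ x, u x ≤ HL f 1 x := fun x => le_HL x fun y => by
    have h1 := hle x y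
    have h2 : dM M x y ^ 2 ≤ dist x y ^ 2 := by
      have := dM_nonneg hM x y
      have := dM_le_dist (M := M) x y
      gcongr
    rw [div_one]
    linarith
  have hb := bgl hC hLS hfB hfL
  have hQ := CB.HL hfB hfL one_pos
  have hfCB : CB f := ⟨hfL.continuous, B, hfB⟩
  have hZ : 0 < ∫ x, Real.exp (1 / C * HL f 1 x) ∂μ :=
    integral_exp_pos (((CB.const _).mul hQ).exp.int μ)
  have hφ := ((CB.const (1 / C)).mul hQ).sub (CB.const (1 / C * ∫ x, f x ∂μ))
  obtain ⟨b, hbφ⟩ := hφ.2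
  have hent := entropy_ineq hac hH hφ.1.measurable hbφ (by
    have : ∀ x, Real.exp (1 / C * HL f 1 x - 1 / C * ∫ x, f x ∂μ) =
      Real.exp (1 / C * HL f 1 x) * Real.exp (-(1 / C * ∫ x, f x ∂μ)) := fun x => by
        rw [← Real.exp_add]; rfl
    simp only [this]
    rw [integral_mul_const, ← Real.exp_log hZ, ← Real.exp_add, Real.exp_le_one_iff]
    linarith)
  rw [integral_sub (((CB.const _).mul hQ).int ν) (integrable_const _), integral_const_mul] at hent
  simp only [integral_const, probReal_univ, one_smul] at hent
  have h1 : ∫ x, u x ∂ν ≤ ∫ x, HL f 1 x ∂ν := integral_mono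
    (Integrable.of_bound hu.aestronglyMeasurable B (ae_of_all _ hBu)) (hQ.int ν) huQ
  have h2 : ∫ x, f x ∂μ ≤ ∫ x, - v x ∂μ := integral_mono (hfCB.int μ)
    (Integrable.of_bound hv.aestronglyMeasurable B' (ae_of_all _ hBv)).neg hfv
  rw [integral_neg] at h2
  have h3 : C * (1 / C * ∫ x, HL f 1 x ∂ν - 1 / C * ∫ x, f x ∂μ) ≤ C * (relEntropy ν μ).toReal := by
    gcongr
  have h4 : C * (1 / C * ∫ x, HL f 1 x ∂ν - 1 / C * ∫ x, f x ∂μ) =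
    ∫ x, HL f 1 x ∂ν - ∫ x, f x ∂μ := by field_simp
  linarith

end Entropy

section Duality

variable {k : ℕ}

local notation "E" => EuclideanSpace ℝ (Fin k)

/-- finite linear programming duality for transport. -/
lemma lp_dual {ι : Type*} [Fintype ι] (a b : ι → ℝ) (c : ι → ι → ℝ) (T : ℝ)
    (ha0 : ∀ i, 0 ≤ a i) (hb0 : ∀ i, 0 ≤ b i) (ha1 : ∑ i, a i = 1) (hb1 : ∑ i, b i = 1)
    (h : ∀ u v : ι → ℝ, (∀ i j, u i + v j ≤ c i j) → ∑ i, a i * u i + ∑ j, b j * v j ≤ T) :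
    ∃ p : ι → ι → ℝ, (∀ i j, 0 ≤ p i j) ∧ (∀ i, ∑ j, p i j = a i) ∧ (∀ j, ∑ i, p i j = b j) ∧
      ∑ i, ∑ j, p i j * c i j ≤ T := by
  classical
  let A : (ι × ι → ℝ) →ₗ[ℝ] (ι → ℝ) × (ι → ℝ) × ℝ :=
    { toFun := fun p => (fun i => ∑ j, p (i, j), fun j => ∑ i, p (i, j),
        ∑ i, ∑ j, p (i, j) * c i j)
      map_add' := by
        intro p q
        ext <;> simp [Finset.sum_add_distrib, add_mul]
      map_smul' := by
        intro r p
        ext <;> simp [Finset.mul_sum, mul_assoc] }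
  have hAc : Continuous A := A.continuous_of_finiteDimensional
  let S : Set ((ι → ℝ) × (ι → ℝ) × ℝ) := A '' stdSimplex ℝ (ι × ι)
  let R : Set ((ι → ℝ) × (ι → ℝ) × ℝ) := {z | z.1 = a ∧ z.2.1 = b ∧ z.2.2 ≤ T}
  by_cases hd : Disjoint S R
  · exfalso
    have hSc : Convex ℝ S := (convex_stdSimplex ℝ (ι × ι)).linear_image A
    have hSk : IsCompact S := (isCompact_stdSimplex ℝ (ι × ι)).image hAc
    have hRc : Convex ℝ R := by
      rintro ⟨x1, x2, x3⟩ ⟨hx1, hx2, hx3⟩ ⟨y1, y2, y3⟩ ⟨hy1, hy2, hy3⟩ α β hα hβ hαβ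
      simp only at hx1 hx2 hx3 hy1 hy2 hy3
      subst hx1 hx2
      refine ⟨?_, ?_, ?_⟩
      · simp [hy1, ← add_smul, hαβ]
      · simp [hy2, ← add_smul, hαβ]
      · simp only [Prod.smul_mk, Prod.mk_add_mk, smul_eq_mul]
        have : T = α * T + β * T := by rw [← add_mul, hαβ, one_mul]
        rw [this]
        gcongr
    have hRcl : IsClosed R := by
      have h1 : IsClosed {z : (ι → ℝ) × (ι → ℝ) × ℝ | z.1 = a} := isClosed_eq (by fun_prop) (by fun_prop)
      have h2 : IsClosed {z : (ι → ℝ) × (ι → ℝ) × ℝ | z.2.1 = b} := isClosed_eq (by fun_prop) (by fun_prop)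
      have h3 : IsClosed {z : (ι → ℝ) × (ι → ℝ) × ℝ | z.2.2 ≤ T} := isClosed_le (by fun_prop) (by fun_prop)
      exact h1.inter (h2.inter h3)
    obtain ⟨f, s, s', hs, hss, hs'⟩ := geometric_hahn_banach_compact_closed hSc hSk hRc hRcl hd
    set u : ι → ℝ := fun i => f (Pi.single i 1, 0, 0) with hu
    set v : ι → ℝ := fun i => f (0, Pi.single i 1, 0) with hv
    set w : ℝ := f (0, 0, 1) with hw
    have hf : ∀ x y t, f (x, y, t) = ∑ i, x i * u i + ∑ i, y i * v i + t * w := by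
      intro x y t
      have e : ((x, y, t) : (ι → ℝ) × (ι → ℝ) × ℝ) =
        ∑ i, x i • ((Pi.single i 1, 0, 0) : (ι → ℝ) × (ι → ℝ) × ℝ) +
        ∑ i, y i • ((0, Pi.single i 1, 0) : (ι → ℝ) × (ι → ℝ) × ℝ) +
          t • ((0, 0, 1) : (ι → ℝ) × (ι → ℝ) × ℝ) := by
        ext j
        · simp [Prod.fst_sum, Finset.sum_apply, Pi.single_apply]
        · simp [Prod.fst_sum, Prod.snd_sum, Finset.sum_apply, Pi.single_apply]
        · simp [Prod.snd_sum]
      rw [e]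
      simp only [map_add, map_sum, map_smul, smul_eq_mul, hu, hv, hw]
    have hij : ∀ i j, u i + v j + c i j * w < s := by
      intro i j
      have h1 := hs _ ⟨Pi.single (i, j) 1, single_mem_stdSimplex ℝ (i, j), rfl⟩
      have e : A (Pi.single (i, j) 1) = (Pi.single i 1, Pi.single j 1, c i j) := by
        ext x
        · simp only [A, LinearMap.coe_mk, AddHom.coe_mk, Pi.single_apply, Prod.mk.injEq]
          by_cases hx : x = i <;> simp [hx]
        · simp only [A, LinearMap.coe_mk, AddHom.coe_mk, Pi.single_apply, Prod.mk.injEq]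
          by_cases hx : x = j <;> simp [hx]
        · simp only [A, LinearMap.coe_mk, AddHom.coe_mk, Pi.single_apply, Prod.mk.injEq]
          rw [Finset.sum_eq_single i, Finset.sum_eq_single j]
          · simp
          · intro y _ hy; simp [hy]
          · simp
          · intro y _ hy; simp [hy]
          · simp
      rw [e, hf] at h1
      simpa [Pi.single_apply] using h1
    set U := ∑ i, a i * u i + ∑ j, b j * v j with hU
    have hT : ∀ t ≤ T, s < U + t * w := by
      intro t ht
      have := hs' (a, b, t) ⟨rfl, rfl, ht⟩
      rw [hf] at this
      linarith
    have hw0 : w ≤ 0 := by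
      by_contra hw0
      push Not at hw0
      have h1 := hT (min T ((s - U) / w)) (min_le_left _ _)
      have h2 : min T ((s - U) / w) * w ≤ (s - U) / w * w := by
        gcongr; exact min_le_right _ _
      rw [div_mul_cancel₀ _ hw0.ne'] at h2
      linarith
    have havg : U + (∑ i, ∑ j, a i * b j * c i j) * w ≤ s := by
      have h1 : ∑ i, ∑ j, a i * b j * (u i + v j + c i j * w) ≤ ∑ i, ∑ j, a i * b j * s := by
        refine Finset.sum_le_sum fun i _ => Finset.sum_le_sum fun j _ => ?_
        exact mul_le_mul_of_nonneg_left (hij i j).le (mul_nonneg (ha0 i) (hb0 j))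
      have h2 : ∑ i, ∑ j, a i * b j * s = s := by
        simp_rw [← Finset.sum_mul, ← Finset.mul_sum, hb1, mul_one, ha1, one_mul]
      have h3 : ∑ i, ∑ j, a i * b j * (u i + v j + c i j * w) =
          U + (∑ i, ∑ j, a i * b j * c i j) * w := by
        have e1 : ∑ i, ∑ j, a i * b j * u i = ∑ i, a i * u i := by
          refine Finset.sum_congr rfl fun i _ => ?_
          rw [← Finset.sum_mul, ← Finset.mul_sum, hb1, mul_one]
        have e2 : ∑ i, ∑ j, a i * b j * v j = ∑ j, b j * v j := by
          rw [Finset.sum_comm]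
          refine Finset.sum_congr rfl fun j _ => ?_
          simp_rw [mul_assoc]
          rw [← Finset.sum_mul, ha1, one_mul]
        simp_rw [mul_add, Finset.sum_add_distrib]
        rw [e1, e2, hU, Finset.sum_mul]
        congr 1
        refine Finset.sum_congr rfl fun i _ => ?_
        rw [Finset.sum_mul]
        refine Finset.sum_congr rfl fun j _ => ?_
        ring
      linarith
    have hwneg : w < 0 := by
      rcases hw0.eq_or_lt with h0 | h0
      · have := hT T le_rfl
        rw [h0] at this havg
        linarith
      · exact h0
    have hfin := h (fun i => (u i - s) / (-w)) (fun j => v j / (-w)) (by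
      intro i j
      rw [← add_div, div_le_iff₀ (by linarith)]
      have := hij i j
      linarith)
    have e : ∑ i, a i * ((u i - s) / (-w)) + ∑ j, b j * (v j / (-w)) = (U - s) / (-w) := by
      simp_rw [← mul_div_assoc, ← Finset.sum_div, mul_sub, Finset.sum_sub_distrib]
      rw [← Finset.sum_mul, ha1, hU]
      ring
    rw [e, div_le_iff₀ (by linarith)] at hfin
    have := hT T le_rfl
    linarith
  · rw [Set.not_disjoint_iff] at hd
    obtain ⟨z, ⟨p, hp, rfl⟩, h1, h2, h3⟩ := hd
    refine ⟨fun i j => p (i, j), fun i j => hp.1 _, fun i => congrFun h1 i, fun j => congrFun h2 j, h3⟩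

open ProbabilityTheory in
/-- gluing a coupling of the discretised marginals -/
lemma glue {ι : Type*} [Fintype ι] [MeasurableSpace ι] [DiscreteMeasurableSpace ι]
    {Y : Type*} [MeasurableSpace Y] (ν μ : Measure Y) [IsProbabilityMeasure ν]
    [IsProbabilityMeasure μ] (X : Y → ι) (hX : Measurable X) (p : ι → ι → ℝ)
    (hp : ∀ i j, 0 ≤ p i j) (h1 : ∀ i, ∑ j, p i j = ν.real (X ⁻¹' {i}))
    (h2 : ∀ j, ∑ i, p i j = μ.real (X ⁻¹' {j})) :
    ∃ π : Measure (Y × Y), π.map Prod.fst = ν ∧ π.map Prod.snd = μ ∧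
      ∀ c : ι → ι → ℝ, (∀ i j, 0 ≤ c i j) →
      ∫⁻ z, ENNReal.ofReal (c (X z.1) (X z.2)) ∂π ≤ ENNReal.ofReal (∑ i, ∑ j, p i j * c i j) := by
  classical
  have hA : ∀ i, MeasurableSet (X ⁻¹' {i}) := fun i => hX (measurableSet_singleton i)
  have huniv : ∀ (ρ : Measure Y) [IsProbabilityMeasure ρ] (i : ι), ρ (X ⁻¹' {i}) ≠ 0 →
      (ρ[|X ⁻¹' {i}]) Set.univ = 1 := by
    intro ρ _ i hi
    have := cond_isProbabilityMeasure hi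
    exact measure_univ
  have hz1 : ∀ i j, ν (X ⁻¹' {i}) = 0 → p i j = 0 := by
    intro i j hi
    have h3 := h1 i
    rw [Measure.real, hi, ENNReal.toReal_zero] at h3
    exact (Finset.sum_eq_zero_iff_of_nonneg (fun j _ => hp i j)).1 h3 j (Finset.mem_univ _)
  have hz2 : ∀ i j, μ (X ⁻¹' {j}) = 0 → p i j = 0 := by
    intro i j hj
    have h3 := h2 j
    rw [Measure.real, hj, ENNReal.toReal_zero] at h3
    exact (Finset.sum_eq_zero_iff_of_nonneg (fun i _ => hp i j)).1 h3 i (Finset.mem_univ _)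
  have hm1 : ∀ i j, ENNReal.ofReal (p i j) * (ν[|X ⁻¹' {i}]) Set.univ = ENNReal.ofReal (p i j) := by
    intro i j
    by_cases h : ν (X ⁻¹' {i}) = 0
    · rw [hz1 i j h]; simp
    · rw [huniv ν i h, mul_one]
  have hm2 : ∀ i j, ENNReal.ofReal (p i j) * (μ[|X ⁻¹' {j}]) Set.univ = ENNReal.ofReal (p i j) := by
    intro i j
    by_cases h : μ (X ⁻¹' {j}) = 0
    · rw [hz2 i j h]; simp
    · rw [huniv μ j h, mul_one]
  have hs1 : ∀ i, ∑ j, ENNReal.ofReal (p i j) = ν (X ⁻¹' {i}) := by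
    intro i
    rw [← ENNReal.ofReal_sum_of_nonneg (fun j _ => hp i j), h1 i, ofReal_measureReal]
  have hs2 : ∀ j, ∑ i, ENNReal.ofReal (p i j) = μ (X ⁻¹' {j}) := by
    intro j
    rw [← ENNReal.ofReal_sum_of_nonneg (fun i _ => hp i j), h2 j, ofReal_measureReal]
  refine ⟨∑ i, ∑ j, ENNReal.ofReal (p i j) • (ν[|X ⁻¹' {i}]).prod (μ[|X ⁻¹' {j}]), ?_, ?_, ?_⟩
  · rw [Measure.map_finset_sum measurable_fst.aemeasurable]
    conv_rhs => rw [← sum_meas_smul_cond_fiber hX ν]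
    refine Finset.sum_congr rfl fun i _ => ?_
    rw [Measure.map_finset_sum measurable_fst.aemeasurable, ← hs1 i, Finset.sum_smul]
    refine Finset.sum_congr rfl fun j _ => ?_
    rw [Measure.map_smul, Measure.map_fst_prod, smul_smul, hm2]
  · rw [Finset.sum_comm, Measure.map_finset_sum measurable_snd.aemeasurable]
    conv_rhs => rw [← sum_meas_smul_cond_fiber hX μ]
    refine Finset.sum_congr rfl fun j _ => ?_
    rw [Measure.map_finset_sum measurable_snd.aemeasurable, ← hs2 j, Finset.sum_smul]
    refine Finset.sum_congr rfl fun i _ => ?_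
    rw [Measure.map_smul, Measure.map_snd_prod, smul_smul, hm1]
  · intro c hc
    rw [lintegral_finsetSum_measure,
      ENNReal.ofReal_sum_of_nonneg (fun i _ => Finset.sum_nonneg fun j _ => mul_nonneg (hp i j) (hc i j))]
    refine Finset.sum_le_sum fun i _ => ?_
    rw [lintegral_finsetSum_measure,
      ENNReal.ofReal_sum_of_nonneg (fun j _ => mul_nonneg (hp i j) (hc i j))]
    refine Finset.sum_le_sum fun j _ => ?_
    rw [lintegral_smul_measure]
    have e1 : ∀ᵐ z ∂((ν[|X ⁻¹' {i}]).prod (μ[|X ⁻¹' {j}])), z.1 ∈ X ⁻¹' {i} :=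
      Measure.quasiMeasurePreserving_fst.ae (ae_cond_mem (hA i))
    have e2 : ∀ᵐ z ∂((ν[|X ⁻¹' {i}]).prod (μ[|X ⁻¹' {j}])), z.2 ∈ X ⁻¹' {j} :=
      Measure.quasiMeasurePreserving_snd.ae (ae_cond_mem (hA j))
    have e3 : ∫⁻ z, ENNReal.ofReal (c (X z.1) (X z.2)) ∂((ν[|X ⁻¹' {i}]).prod (μ[|X ⁻¹' {j}])) =
        ∫⁻ z, ENNReal.ofReal (c i j) ∂((ν[|X ⁻¹' {i}]).prod (μ[|X ⁻¹' {j}])) := by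
      refine lintegral_congr_ae ?_
      filter_upwards [e1, e2] with z h1 h2
      rw [Set.mem_preimage, Set.mem_singleton_iff] at h1 h2
      rw [h1, h2]
    rw [e3, lintegral_const, ENNReal.ofReal_mul (hp i j), ← Set.univ_prod_univ, Measure.prod_prod,
      smul_eq_mul]
    have hle : ∀ (ρ : Measure Y) (i : ι), (ρ[|X ⁻¹' {i}]) Set.univ ≤ 1 := fun ρ i => prob_le_one
    calc _ ≤ ENNReal.ofReal (p i j) * (ENNReal.ofReal (c i j) * (1 * 1)) := by
          gcongr
          · exact hle ν i
          · exact hle μ j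
      _ = _ := by simp

lemma quant (ν μ : Measure E) [IsProbabilityMeasure ν] [IsProbabilityMeasure μ] {M : ℝ} (hM : 0 < M)
    {ε : ℝ} (hε : 0 < ε) : ∃ S : SimpleFunc E E, ∫ x, dM M x (S x) ∂ν < ε ∧ ∫ x, dM M x (S x) ∂μ < ε := by
  obtain ⟨S, hS⟩ : ∃ S : ℕ → SimpleFunc E E, ∀ x, Tendsto (fun n => S n x) atTop (𝓝 x) :=
    ⟨SimpleFunc.approxOn id measurable_id Set.univ 0 (Set.mem_univ _), fun x =>
      SimpleFunc.tendsto_approxOn measurable_id (Set.mem_univ _) (by simp)⟩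
  have hd : ∀ (ρ : Measure E) [IsProbabilityMeasure ρ],
      Tendsto (fun n => ∫ x, dM M x (S n x) ∂ρ) atTop (𝓝 0) := by
    intro ρ _
    have hmeas : ∀ n, Measurable fun x => dM M x (S n x) := fun n =>
      dM_cont.measurable.comp (measurable_id.prodMk (S n).measurable)
    have hbd : ∀ n x, ‖dM M x (S n x)‖ ≤ M := fun n x => by
      rw [Real.norm_eq_abs, abs_of_nonneg (dM_nonneg hM _ _)]; exact dM_le _ _
    have hlim : ∀ x, Tendsto (fun n => dM M x (S n x)) atTop (𝓝 0) := fun x => by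
      have h0 : Tendsto (fun n => dist x (S n x)) atTop (𝓝 0) := by
        have := (tendsto_const_nhds (x := x)).dist (hS x)
        rwa [dist_self] at this
      exact squeeze_zero (fun n => dM_nonneg hM _ _) (fun n => dM_le_dist _ _) h0
    have := tendsto_integral_of_dominated_convergence (μ := ρ) (F := fun n x => dM M x (S n x))
      (f := fun _ => (0 : ℝ)) (fun _ => M)
      (fun n => (hmeas n).aestronglyMeasurable)
      (integrable_const _)
      (fun n => ae_of_all _ (hbd n))
      (ae_of_all _ hlim)
    simpa using this
  obtain ⟨n, h1, h2⟩ := (((hd ν).eventually_lt_const hε).and ((hd μ).eventually_lt_const hε)).exists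
  exact ⟨S n, h1, h2⟩

lemma int_fin {ι : Type*} [Fintype ι] [MeasurableSpace ι] [DiscreteMeasurableSpace ι]
    {Y : Type*} [MeasurableSpace Y] (ν : Measure Y) [IsProbabilityMeasure ν] (X : Y → ι)
    (hX : Measurable X) (u : ι → ℝ) : ∫ x, u (X x) ∂ν = ∑ i, ν.real (X ⁻¹' {i}) * u i := by
  have := Measure.isProbabilityMeasure_map (μ := ν) hX.aemeasurable
  rw [← integral_map hX.aemeasurable (f := u) (Measurable.of_discrete).aestronglyMeasurable,
    integral_fintype Integrable.of_finite]
  refine Finset.sum_congr rfl fun i _ => ?_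
  rw [map_measureReal_apply hX (measurableSet_singleton i), smul_eq_mul]

lemma duality (ν μ : Measure E) [IsProbabilityMeasure ν] [IsProbabilityMeasure μ] {M : ℝ}
    (hM : 0 < M) (T : ℝ)
    (h : ∀ (u v : E → ℝ) (B B' : ℝ), Measurable u → Measurable v → (∀ x, |u x| ≤ B) →
      (∀ x, |v x| ≤ B') → (∀ x y, u x + v y ≤ dM M x y ^ 2) → ∫ x, u x ∂ν + ∫ y, v y ∂μ ≤ T)
    {ε : ℝ} (hε : 0 < ε) :
    ∃ π : Measure (E × E), π.map Prod.fst = ν ∧ π.map Prod.snd = μ ∧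
      ∫⁻ z, ENNReal.ofReal (dM M z.1 z.2 ^ 2) ∂π ≤ ENNReal.ofReal (T + ε) := by
  classical
  have hM2 : 0 ≤ 2 * M := by positivity
  obtain ⟨S, hS1, hS2⟩ := quant ν μ hM (ε := ε / (8 * M)) (by positivity)
  let ι := {y // y ∈ S.range}
  let X : E → ι := fun x => ⟨S x, S.mem_range_self x⟩
  have hX : Measurable X := S.measurable.subtype_mk
  set e : E → ℝ := fun x => dM M x (S x) with he
  have hem : Measurable e := dM_cont.measurable.comp (measurable_id.prodMk S.measurable)
  have he0 : ∀ x, 0 ≤ e x := fun x => dM_nonneg hM _ _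
  have heM : ∀ x, e x ≤ M := fun x => dM_le _ _
  have hei : ∀ (ρ : Measure E) [IsProbabilityMeasure ρ], Integrable e ρ := fun ρ _ =>
    Integrable.of_bound hem.aestronglyMeasurable M (ae_of_all _ fun x => by
      rw [Real.norm_eq_abs, abs_of_nonneg (he0 x)]; exact heM x)
  set δ := 2 * M * (∫ x, e x ∂ν + ∫ x, e x ∂μ) with hδ
  have hδ0 : 0 ≤ δ := by
    have h1 : 0 ≤ ∫ x, e x ∂ν := integral_nonneg he0
    have h2 : 0 ≤ ∫ x, e x ∂μ := integral_nonneg he0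
    positivity
  have hδε : δ ≤ ε / 2 := by
    calc δ ≤ 2 * M * (ε / (8 * M) + ε / (8 * M)) := by rw [hδ]; gcongr
      _ = ε / 2 := by field_simp; norm_num
  have hsum : ∀ (ρ : Measure E) [IsProbabilityMeasure ρ], ∑ i, ρ.real (X ⁻¹' {i}) = 1 := by
    intro ρ _
    have := int_fin ρ X hX (fun _ => 1)
    simpa using this.symm
  obtain ⟨p, hp, h1, h2, h3⟩ := lp_dual (fun i => ν.real (X ⁻¹' {i})) (fun i => μ.real (X ⁻¹' {i}))
    (fun i j : ι => dM M (i : E) (j : E) ^ 2) (T + δ) (fun i => measureReal_nonneg)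
    (fun i => measureReal_nonneg) (hsum ν) (hsum μ) (by
      intro u v huv
      have hfb : ∀ w : ι → ℝ, ∃ B, ∀ x, |w (X x) - 2 * M * e x| ≤ B := by
        intro w
        refine ⟨∑ i, |w i| + 2 * M * M, fun x => (abs_sub _ _).trans (add_le_add ?_ ?_)⟩
        · exact Finset.single_le_sum (f := fun i => |w i|) (fun i _ => abs_nonneg _) (Finset.mem_univ _)
        · rw [abs_of_nonneg (mul_nonneg hM2 (he0 x))]
          exact mul_le_mul_of_nonneg_left (heM x) hM2
      have hfm : ∀ w : ι → ℝ, Measurable fun x => w (X x) - 2 * M * e x := fun w =>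
        ((Measurable.of_discrete (f := w)).comp hX).sub (hem.const_mul _)
      obtain ⟨B, hB⟩ := hfb u
      obtain ⟨B', hB'⟩ := hfb v
      have key := h _ _ B B' (hfm u) (hfm v) hB hB' (by
        intro x y
        have h4 := huv (X x) (X y)
        have h5 := cM_diff hM (S x) (S y) x y
        rw [dM_comm (S x) x, dM_comm (S y) y] at h5
        change u (X x) + v (X y) ≤ dM M (S x) (S y) ^ 2 at h4
        change _ ≤ dM M x y ^ 2 + 2 * M * (e x + e y) at h5
        linarith)
      have hi : ∀ (w : ι → ℝ) (ρ : Measure E) [IsProbabilityMeasure ρ],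
          ∫ x, (w (X x) - 2 * M * e x) ∂ρ = ∑ i, ρ.real (X ⁻¹' {i}) * w i - 2 * M * ∫ x, e x ∂ρ := by
        intro w ρ _
        rw [integral_sub ?_ ((hei ρ).const_mul _), int_fin ρ X hX, integral_const_mul]
        refine Integrable.of_bound
          ((Measurable.of_discrete (f := w)).comp hX).aestronglyMeasurable (∑ i, |w i|)
          (ae_of_all _ fun x => ?_)
        exact Finset.single_le_sum (f := fun i => |w i|) (fun i _ => abs_nonneg _) (Finset.mem_univ _)
      rw [hi, hi] at key
      linarith)
  obtain ⟨π, hπ1, hπ2, hπ⟩ := glue ν μ X hX p hp h1 h2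
  refine ⟨π, hπ1, hπ2, ?_⟩
  have hc := hπ (fun i j : ι => dM M (i : E) (j : E) ^ 2) (fun i j => sq_nonneg _)
  have hT0 : 0 ≤ T + δ := le_trans (Finset.sum_nonneg fun i _ => Finset.sum_nonneg fun j _ =>
    mul_nonneg (hp i j) (sq_nonneg _)) h3
  have hl : ∀ (ρ : Measure E) [IsProbabilityMeasure ρ],
      ∫⁻ x, ENNReal.ofReal (2 * M * e x) ∂ρ = ENNReal.ofReal (2 * M * ∫ x, e x ∂ρ) := by
    intro ρ _
    rw [← integral_const_mul, ofReal_integral_eq_lintegral_ofReal ((hei ρ).const_mul _)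
      (ae_of_all _ fun x => mul_nonneg hM2 (he0 x))]
  have hm' : Measurable fun x => ENNReal.ofReal (2 * M * e x) := (hem.const_mul _).ennreal_ofReal
  have hl1 : ∫⁻ z, ENNReal.ofReal (2 * M * e z.1) ∂π = ENNReal.ofReal (2 * M * ∫ x, e x ∂ν) := by
    rw [← hl ν, ← hπ1, lintegral_map hm' measurable_fst]
  have hl2 : ∫⁻ z, ENNReal.ofReal (2 * M * e z.2) ∂π = ENNReal.ofReal (2 * M * ∫ x, e x ∂μ) := by
    rw [← hl μ, ← hπ2, lintegral_map hm' measurable_snd]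
  calc ∫⁻ z, ENNReal.ofReal (dM M z.1 z.2 ^ 2) ∂π
      ≤ ∫⁻ z, (ENNReal.ofReal (dM M (X z.1 : E) (X z.2 : E) ^ 2) +
          (ENNReal.ofReal (2 * M * e z.1) + ENNReal.ofReal (2 * M * e z.2))) ∂π := by
        refine lintegral_mono fun z => ?_
        simp only
        rw [← ENNReal.ofReal_add (mul_nonneg hM2 (he0 _)) (mul_nonneg hM2 (he0 _)),
          ← ENNReal.ofReal_add (sq_nonneg _)
            (add_nonneg (mul_nonneg hM2 (he0 _)) (mul_nonneg hM2 (he0 _))), ← mul_add]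
        exact ENNReal.ofReal_le_ofReal (cM_diff hM z.1 z.2 (S z.1) (S z.2))
    _ = ∫⁻ z, ENNReal.ofReal (dM M (X z.1 : E) (X z.2 : E) ^ 2) ∂π +
          (ENNReal.ofReal (2 * M * ∫ x, e x ∂ν) + ENNReal.ofReal (2 * M * ∫ x, e x ∂μ)) := by
        have m2 : Measurable fun z : E × E => ENNReal.ofReal (2 * M * e z.2) := hm'.comp measurable_snd
        have m1 : Measurable fun z : E × E => ENNReal.ofReal (2 * M * e z.1) +
          ENNReal.ofReal (2 * M * e z.2) := (hm'.comp measurable_fst).add m2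
        rw [lintegral_add_right _ m1, lintegral_add_right _ m2, hl1, hl2]
    _ ≤ ENNReal.ofReal (T + δ) + ENNReal.ofReal δ := by
        refine add_le_add (hc.trans (ENNReal.ofReal_le_ofReal h3)) (le_of_eq ?_)
        rw [← ENNReal.ofReal_add (mul_nonneg hM2 (integral_nonneg he0))
          (mul_nonneg hM2 (integral_nonneg he0)), ← mul_add]
    _ = ENNReal.ofReal (T + δ + δ) := (ENNReal.ofReal_add hT0 hδ0).symm
    _ ≤ _ := ENNReal.ofReal_le_ofReal (by linarith)

end Duality

section Final

variable {k : ℕ}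

local notation "E" => EuclideanSpace ℝ (Fin k)

lemma trunc {C : ℝ} (hC : 0 < C) {μ ν : Measure E} [IsProbabilityMeasure μ]
    [IsProbabilityMeasure ν] (hLS : LS C μ) (hac : ν ≪ μ) (hH : relEntropy ν μ ≠ ∞)
    {M : ℝ} (hM : 0 < M) {ε : ℝ} (hε : 0 < ε) :
    ∃ π : Measure (E × E), π.map Prod.fst = ν ∧ π.map Prod.snd = μ ∧
      ∫⁻ z, ENNReal.ofReal (dM M z.1 z.2 ^ 2) ∂π ≤
        ENNReal.ofReal (C * (relEntropy ν μ).toReal + ε) :=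
  duality ν μ hM _ (fun _ _ _ _ hu hv hBu hBv huv =>
    dual_bound hC hLS hac hH hM hu hv hBu hBv huv) hε

open ProbabilityTheory in
lemma cond_entropy {X : Type*} [MeasurableSpace X] (μ : Measure X) [IsProbabilityMeasure μ]
    {A : Set X} (hA : MeasurableSet A) (h0 : μ A ≠ 0) : relEntropy (μ[|A]) μ ≠ ∞ := by
  have hac : μ[|A] ≪ μ := cond_absolutelyContinuous
  unfold relEntropy
  rw [if_pos hac]
  set K : ℝ≥0∞ := (μ A)⁻¹ with hK
  have hd : μ[|A] = μ.withDensity (A.indicator fun _ => K) := by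
    rw [withDensity_indicator hA, withDensity_const]; rfl
  have hr : (μ[|A]).rnDeriv μ =ᵐ[μ] A.indicator fun _ => K := by
    rw [hd]
    exact Measure.rnDeriv_withDensity μ (measurable_const.indicator hA)
  set b : ℝ≥0∞ := ENNReal.ofReal (K.toReal * Real.log K.toReal - K.toReal + 1) + 1 with hb
  refine ne_top_of_le_ne_top (b := ∫⁻ _, b ∂μ) (by simp [hb]) (lintegral_mono_ae ?_)
  filter_upwards [hr] with x hx
  rw [hx]
  by_cases hxA : x ∈ A
  · simp [hxA, hb]
  · simp [hxA, hb]

lemma moment {ν μ : Measure E} (K : ℝ≥0∞) (f g : E × E → E) (hf : Measurable f) (hg : Measurable g)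
    (h : ∀ M : ℝ, 0 < M → ∃ π : Measure (E × E), π.map f = ν ∧ π.map g = μ ∧
      ∫⁻ z, ENNReal.ofReal (dM M (f z) (g z) ^ 2) ∂π ≤ K) :
    ∫⁻ y, ENNReal.ofReal (‖y‖ ^ 2) ∂μ ≤ 2 * ∫⁻ x, ENNReal.ofReal (‖x‖ ^ 2) ∂ν + 2 * K := by
  have hm : Measurable fun x : E => ENNReal.ofReal (‖x‖ ^ 2) := by fun_prop
  have hmM : ∀ M : ℝ, Measurable fun x : E => ENNReal.ofReal (min ‖x‖ M ^ 2) := fun M => by fun_prop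
  have key : ∀ M : ℝ, 0 < M → ∫⁻ y, ENNReal.ofReal (min ‖y‖ M ^ 2) ∂μ ≤
      2 * ∫⁻ x, ENNReal.ofReal (‖x‖ ^ 2) ∂ν + 2 * K := by
    intro M hM
    obtain ⟨π, h1, h2, h3⟩ := h M hM
    rw [← h2, ← h1, lintegral_map (hmM M) hg, lintegral_map hm hf]
    have hmf : Measurable fun z => 2 * ENNReal.ofReal (‖f z‖ ^ 2) := (hm.comp hf).const_mul 2
    calc ∫⁻ z, ENNReal.ofReal (min ‖g z‖ M ^ 2) ∂π
        ≤ ∫⁻ z, (2 * ENNReal.ofReal (‖f z‖ ^ 2) + 2 * ENNReal.ofReal (dM M (f z) (g z) ^ 2)) ∂π := by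
          refine lintegral_mono fun z => ?_
          have e2 : ∀ r : ℝ, (2 : ℝ≥0∞) * ENNReal.ofReal r = ENNReal.ofReal (2 * r) := fun r => by
            rw [ENNReal.ofReal_mul (by norm_num)]; simp
          rw [e2, e2, ← ENNReal.ofReal_add (by positivity) (by positivity)]
          refine ENNReal.ofReal_le_ofReal ?_
          have t1 := dM_tri hM 0 (f z) (g z)
          have t2 : dM M 0 (g z) = min ‖g z‖ M := by unfold dM; rw [dist_zero_left]
          have t3 : dM M 0 (f z) ≤ ‖f z‖ := by
            have := dM_le_dist (M := M) 0 (f z); rwa [dist_zero_left] at this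
          rw [t2] at t1
          have t4 : 0 ≤ min ‖g z‖ M := le_min (norm_nonneg _) hM.le
          have t5 : min ‖g z‖ M ≤ ‖f z‖ + dM M (f z) (g z) := by linarith
          have t6 : min ‖g z‖ M ^ 2 ≤ (‖f z‖ + dM M (f z) (g z)) ^ 2 := by gcongr
          nlinarith [sq_nonneg (‖f z‖ - dM M (f z) (g z))]
      _ = 2 * ∫⁻ z, ENNReal.ofReal (‖f z‖ ^ 2) ∂π +
          2 * ∫⁻ z, ENNReal.ofReal (dM M (f z) (g z) ^ 2) ∂π := by
          rw [lintegral_add_left hmf, lintegral_const_mul' _ _ (by simp),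
            lintegral_const_mul' _ _ (by simp)]
      _ ≤ _ := by gcongr
  have hlim : Tendsto (fun n : ℕ => ∫⁻ y : E, ENNReal.ofReal (min ‖y‖ ((n : ℝ) + 1) ^ 2) ∂μ) atTop
      (𝓝 (∫⁻ y, ENNReal.ofReal (‖y‖ ^ 2) ∂μ)) := by
    refine lintegral_tendsto_of_tendsto_of_monotone (fun n => (hmM _).aemeasurable)
      (ae_of_all _ fun y => ?_) (ae_of_all _ fun y => ?_)
    · intro n m hnm
      have : (n : ℝ) ≤ m := by exact_mod_cast hnm
      refine ENNReal.ofReal_le_ofReal ?_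
      have : 0 ≤ min ‖y‖ ((n : ℝ) + 1) := le_min (norm_nonneg _) (by positivity)
      gcongr
    · refine tendsto_const_nhds.congr' ?_
      obtain ⟨N, hN⟩ := exists_nat_ge ‖y‖
      filter_upwards [eventually_ge_atTop N] with n hn
      have : (N : ℝ) ≤ n := by exact_mod_cast hn
      rw [min_eq_left (by linarith)]
  exact le_of_tendsto' hlim fun n => key _ (by positivity)

open ProbabilityTheory in
lemma moment_mu {C : ℝ} (hC : 0 < C) {μ : Measure E} [IsProbabilityMeasure μ] (hLS : LS C μ) :
    ∫⁻ y, ENNReal.ofReal (‖y‖ ^ 2) ∂μ ≠ ∞ := by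
  obtain ⟨R, hR⟩ : ∃ R : ℕ, μ (Metric.ball 0 (R : ℝ)) ≠ 0 := by
    by_contra hcon
    push Not at hcon
    have h1 : μ (⋃ R : ℕ, Metric.ball 0 (R : ℝ)) = 0 := measure_iUnion_null hcon
    rw [Metric.iUnion_ball_nat, measure_univ] at h1
    exact one_ne_zero h1
  have hball : MeasurableSet (Metric.ball (0 : E) (R : ℝ)) := measurableSet_ball
  have hp := cond_isProbabilityMeasure (μ := μ) hR
  have hH := cond_entropy μ hball hR
  set ν := μ[|Metric.ball (0 : E) (R : ℝ)] with hν
  have := moment (ν := ν) (μ := μ) _ Prod.fst Prod.snd measurable_fst measurable_snd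
    (fun M hM => trunc hC hLS cond_absolutelyContinuous hH hM one_pos)
  refine ne_top_of_le_ne_top ?_ this
  refine ENNReal.add_ne_top.2 ⟨ENNReal.mul_ne_top (by simp) ?_, ENNReal.mul_ne_top (by simp) (by simp)⟩
  refine ne_top_of_le_ne_top (b := ∫⁻ _, ENNReal.ofReal ((R : ℝ) ^ 2) ∂ν) (by simp)
    (lintegral_mono_ae ?_)
  filter_upwards [ae_cond_mem hball] with x hx
  rw [mem_ball_zero_iff] at hx
  gcongr

lemma moment_nu {C : ℝ} (hC : 0 < C) {μ ν : Measure E} [IsProbabilityMeasure μ]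
    [IsProbabilityMeasure ν] (hLS : LS C μ) (hac : ν ≪ μ) (hH : relEntropy ν μ ≠ ∞) :
    ∫⁻ y, ENNReal.ofReal (‖y‖ ^ 2) ∂ν ≠ ∞ := by
  have := moment (ν := μ) (μ := ν) (ENNReal.ofReal (C * (relEntropy ν μ).toReal + 1))
    Prod.snd Prod.fst measurable_snd measurable_fst
    (fun M hM => by
      obtain ⟨π, h1, h2, h3⟩ := trunc hC hLS hac hH hM one_pos
      refine ⟨π, h2, h1, ?_⟩
      simp_rw [dM_comm (M := M) (Prod.snd _) (Prod.fst _)]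
      exact h3)
  refine ne_top_of_le_ne_top ?_ this
  exact ENNReal.add_ne_top.2 ⟨ENNReal.mul_ne_top (by simp) (moment_mu hC hLS),
    ENNReal.mul_ne_top (by simp) (by simp)⟩

/-- tail of the square norm -/
noncomputable def tl {k : ℕ} (M : ℝ) (x : EuclideanSpace ℝ (Fin k)) : ℝ≥0∞ :=
  {x : EuclideanSpace ℝ (Fin k) | M / 2 < ‖x‖}.indicator (fun x => ENNReal.ofReal (4 * ‖x‖ ^ 2)) x

lemma tl_meas (M : ℝ) : Measurable (tl M : E → ℝ≥0∞) :=
  Measurable.indicator (by fun_prop) (measurableSet_lt measurable_const measurable_norm)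

lemma tl_tendsto (ρ : Measure E) (h : ∫⁻ y, ENNReal.ofReal (‖y‖ ^ 2) ∂ρ ≠ ∞) :
    Tendsto (fun n : ℕ => ∫⁻ x, tl ((n : ℝ) + 1) x ∂ρ) atTop (𝓝 0) := by
  have := tendsto_lintegral_of_dominated_convergence (μ := ρ) (F := fun (n : ℕ) x => tl ((n : ℝ) + 1) x)
    (f := fun _ => 0) (fun x : E => ENNReal.ofReal (4 * ‖x‖ ^ 2)) (fun n => tl_meas _)
    (fun n => ae_of_all _ fun x => Set.indicator_le_self _ _ x) (by
      simp_rw [ENNReal.ofReal_mul (by norm_num : (0 : ℝ) ≤ 4)]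
      rw [lintegral_const_mul' _ _ (by simp)]
      exact ENNReal.mul_ne_top (by simp) h) (ae_of_all _ fun x => by
      refine tendsto_const_nhds.congr' ?_
      obtain ⟨N, hN⟩ := exists_nat_ge (2 * ‖x‖)
      filter_upwards [eventually_ge_atTop N] with n hn
      have : (N : ℝ) ≤ n := by exact_mod_cast hn
      symm
      refine Set.indicator_of_notMem ?_ _
      simp only [Set.mem_setOf_eq, not_lt]
      linarith)
  simpa using this

lemma cost_le (M : ℝ) (x y : E) : ENNReal.ofReal (dist x y ^ 2) ≤
    ENNReal.ofReal (dM M x y ^ 2) + (tl M x + tl M y) := by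
  rcases le_or_gt (dist x y) M with h | h
  · have : dM M x y = dist x y := min_eq_left h
    rw [this]
    exact le_self_add
  · have ht := dist_triangle x 0 y
    rw [dist_zero_left, dist_zero_right] at ht
    refine le_trans ?_ le_add_self
    have h0 := dist_nonneg (x := x) (y := y)
    rcases le_total ‖x‖ ‖y‖ with hxy | hxy
    · refine le_trans ?_ le_add_self
      unfold tl
      rw [Set.indicator_of_mem (by simp only [Set.mem_setOf_eq]; linarith)]
      refine ENNReal.ofReal_le_ofReal ?_
      have : dist x y ^ 2 ≤ (2 * ‖y‖) ^ 2 := by gcongr; linarith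
      linarith
    · refine le_trans ?_ le_self_add
      unfold tl
      rw [Set.indicator_of_mem (by simp only [Set.mem_setOf_eq]; linarith)]
      refine ENNReal.ofReal_le_ofReal ?_
      have : dist x y ^ 2 ≤ (2 * ‖x‖) ^ 2 := by gcongr; linarith
      linarith

lemma main {C : ℝ} (hC : 0 < C) {μ ν : Measure E} [IsProbabilityMeasure μ]
    [IsProbabilityMeasure ν] (hLS : LS C μ) :
    optCost (fun x y => dist x y ^ 2) ν μ ≤ ENNReal.ofReal C * relEntropy ν μ := by
  by_cases hH : relEntropy ν μ = ∞
  · rw [hH, ENNReal.mul_top (by simpa using hC)]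
    exact le_top
  have hac : ν ≪ μ := by
    by_contra hac
    exact hH (by unfold relEntropy; rw [if_neg hac])
  have hν := tl_tendsto ν (moment_nu hC hLS hac hH)
  have hμ := tl_tendsto μ (moment_mu hC hLS)
  set H := (relEntropy ν μ).toReal with hHd
  have key : ∀ n : ℕ, optCost (fun x y => dist x y ^ 2) ν μ ≤
      ENNReal.ofReal (C * H + 1 / ((n : ℝ) + 1)) +
        (∫⁻ x, tl ((n : ℝ) + 1) x ∂ν + ∫⁻ x, tl ((n : ℝ) + 1) x ∂μ) := by
    intro n
    obtain ⟨π, h1, h2, h3⟩ := trunc hC hLS hac hH (M := (n : ℝ) + 1) (by positivity)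
      (ε := 1 / ((n : ℝ) + 1)) (by positivity)
    refine (iInf₂_le π ⟨h1, h2⟩).trans ?_
    have m1 : Measurable fun z : E × E => tl ((n : ℝ) + 1) z.1 := (tl_meas _).comp measurable_fst
    have m2 : Measurable fun z : E × E => tl ((n : ℝ) + 1) z.2 := (tl_meas _).comp measurable_snd
    have m3 : Measurable fun z : E × E => tl ((n : ℝ) + 1) z.1 + tl ((n : ℝ) + 1) z.2 := m1.add m2
    have e1 : ∫⁻ x, tl ((n : ℝ) + 1) x ∂ν = ∫⁻ z, tl ((n : ℝ) + 1) z.1 ∂π := by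
      conv_lhs => rw [← h1]
      rw [lintegral_map (tl_meas _) measurable_fst]
    have e2 : ∫⁻ x, tl ((n : ℝ) + 1) x ∂μ = ∫⁻ z, tl ((n : ℝ) + 1) z.2 ∂π := by
      conv_lhs => rw [← h2]
      rw [lintegral_map (tl_meas _) measurable_snd]
    calc _ ≤ ∫⁻ z, (ENNReal.ofReal (dM ((n : ℝ) + 1) z.1 z.2 ^ 2) +
          (tl ((n : ℝ) + 1) z.1 + tl ((n : ℝ) + 1) z.2)) ∂π :=
          lintegral_mono fun z => cost_le _ _ _
      _ = ∫⁻ z, ENNReal.ofReal (dM ((n : ℝ) + 1) z.1 z.2 ^ 2) ∂π +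
          (∫⁻ x, tl ((n : ℝ) + 1) x ∂ν + ∫⁻ x, tl ((n : ℝ) + 1) x ∂μ) := by
          rw [lintegral_add_right _ m3, lintegral_add_right _ m2, e1, e2]
      _ ≤ _ := by gcongr
  have hlim : Tendsto (fun n : ℕ => ENNReal.ofReal (C * H + 1 / ((n : ℝ) + 1)) +
        (∫⁻ x, tl ((n : ℝ) + 1) x ∂ν + ∫⁻ x, tl ((n : ℝ) + 1) x ∂μ)) atTop
      (𝓝 (ENNReal.ofReal (C * H + 0) + (0 + 0))) := by
    refine Tendsto.add ?_ (hν.add hμ)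
    exact ENNReal.tendsto_ofReal (tendsto_one_div_add_atTop_nhds_zero_nat.const_add _)
  have := ge_of_tendsto' hlim key
  rw [add_zero, add_zero, add_zero, ENNReal.ofReal_mul hC.le, hHd, ENNReal.ofReal_toReal hH] at this
  exact this

end Final

end OV

/-- Otto–Villani theorem: if `μ` on `ℝ^k` satisfies the logarithmic Sobolev inequality
`Ent_μ(f²) ≤ C ∫ |∇f|² dμ` for every Lipschitz `f`, then it satisfies Talagrand's
inequality `T₂(C)`: `W₂²(ν,μ) ≤ C H(ν|μ)` for all probability measures `ν`. -/
theorem otto_villani (k : ℕ) (C : ℝ) (hC : 0 < C)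
    (μ : Measure (EuclideanSpace ℝ (Fin k))) [IsProbabilityMeasure μ]
    (hLS : ∀ f : EuclideanSpace ℝ (Fin k) → ℝ, (∃ L : NNReal, LipschitzWith L f) →
      ∫ x, f x ^ 2 * Real.log (f x ^ 2) ∂μ -
          (∫ x, f x ^ 2 ∂μ) * Real.log (∫ x, f x ^ 2 ∂μ) ≤
        C * ∫ x, localSlope f x ^ 2 ∂μ)
    (ν : Measure (EuclideanSpace ℝ (Fin k))) [IsProbabilityMeasure ν] :
    optCost (fun x y => dist x y ^ 2) ν μ ≤ ENNReal.ofReal C * relEntropy ν μ := by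
  exact OV.main hC hLS
end

section
/- (Dimension-free Gaussian concentration from T₂) Let (𝒳,d) be a Polish metric space and suppose μ ∈ P(𝒳) satisfies T₂(C): W₂²(ν,μ) ≤ C H(ν|μ) for all ν ∈ P(𝒳). Then for every integer n ≥ 1: (i) the product measure μⁿ satisfies T₂(C) on (𝒳ⁿ, d₂), i.e. 𝒯_{d₂²}(ν,μⁿ) ≤ C H(ν|μⁿ) for all ν ∈ P(𝒳ⁿ); and (ii) for every Borel set A ⊆ 𝒳ⁿ with μⁿ(A) ≥ 1/2 and every r ≥ r₀ := √(C log 2), μⁿ(A^r) ≥ 1 − exp(−(r − r₀)²/C), where A^r is the enlargement of A for the metric d₂. -/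
open MeasureTheory ENNReal

/-- The `ℓ²`-product metric `d₂` on `𝒳ⁿ`. -/
noncomputable def l2ProdDist {X : Type*} [MetricSpace X] {n : ℕ} (x y : Fin n → X) : ℝ :=
  Real.sqrt (∑ i, dist (x i) (y i) ^ 2)

section helpers


open ProbabilityTheory InformationTheory Set

lemma relEntropy_eq_klDiv {X : Type*} [MeasurableSpace X] (ν μ : Measure X)
    [IsFiniteMeasure ν] [IsFiniteMeasure μ] : relEntropy ν μ = klDiv ν μ := by
  classical
  rw [klDiv_eq_lintegral_klFun, relEntropy]
  have h : ∀ t : ℝ, t * Real.log t - t + 1 = klFun t := fun t => by rw [klFun_apply]; ring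
  simp only [h]

lemma tsum_klDiv_restrict_le {Z : Type*} [MeasurableSpace Z] (ν ρ : Measure Z)
    [IsFiniteMeasure ν] [IsFiniteMeasure ρ] (B : ℕ → Set Z) (hB : ∀ i, MeasurableSet (B i))
    (hd : Pairwise (fun i j => Disjoint (B i) (B j))) (hU : ⋃ i, B i = univ) :
    ∑' i, klDiv (ν.restrict (B i)) (ρ.restrict (B i)) ≤ klDiv ν ρ := by
  by_cases h : ν ≪ ρ
  swap
  · simp [klDiv_of_not_ac h]
  have hac : ∀ i, ν.restrict (B i) ≪ ρ.restrict (B i) := fun i => h.restrict _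
  have hr : ∀ i, (ν.restrict (B i)).rnDeriv (ρ.restrict (B i)) =ᵐ[ρ.restrict (B i)]
      ν.rnDeriv ρ := by
    intro i
    have h1 : ν.restrict (B i) = (ρ.restrict (B i)).withDensity (ν.rnDeriv ρ) := by
      conv_lhs => rw [← Measure.withDensity_rnDeriv_eq ν ρ h]
      rw [restrict_withDensity (hB i)]
    conv_lhs => rw [h1]
    exact Measure.rnDeriv_withDensity _ (Measure.measurable_rnDeriv _ _)
  rw [klDiv_eq_lintegral_klFun_of_ac h, ← setLIntegral_univ (μ := ρ), ← hU,
    lintegral_iUnion hB hd]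
  refine ENNReal.tsum_le_tsum fun i => ?_
  rw [klDiv_eq_lintegral_klFun_of_ac (hac i)]
  refine le_of_eq (lintegral_congr_ae ?_)
  filter_upwards [hr i] with x hx
  rw [hx]

lemma entropy_superadd {X Y : Type*} [MeasurableSpace X] [MeasurableSpace Y]
    [StandardBorelSpace Y] [Nonempty Y] (ν : Measure (X × Y)) (μ₁ : Measure X) (μ₂ : Measure Y)
    [IsProbabilityMeasure ν] [IsProbabilityMeasure μ₁] [IsProbabilityMeasure μ₂]
    (B : ℕ → Set X) (hB : ∀ i, MeasurableSet (B i))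
    (hd : Pairwise (fun i j => Disjoint (B i) (B j))) (hU : ⋃ i, B i = univ) :
    klDiv ν.fst μ₁ + ∑' i, klDiv ((ν.restrict (Prod.fst ⁻¹' B i)).map Prod.snd) (ν.fst (B i) • μ₂)
      ≤ klDiv ν (μ₁.prod μ₂) := by
  have e1 : klDiv ν (μ₁.prod μ₂) = klDiv ν.fst μ₁ + klDiv ν (ν.fst.prod μ₂) := by
    have := klDiv_compProd_eq_add ν.fst μ₁ ν.condKernel (Kernel.const X μ₂)
    rw [ν.disintegrate ν.condKernel] at this
    simpa only [Measure.compProd_const] using this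
  rw [e1]
  gcongr
  refine le_trans (ENNReal.tsum_le_tsum fun i => ?_)
    (tsum_klDiv_restrict_le ν (ν.fst.prod μ₂) (fun i => Prod.fst ⁻¹' B i)
      (fun i => measurable_fst (hB i)) (fun i j hij => (hd hij).preimage _)
      (by rw [← preimage_iUnion, hU, preimage_univ]))
  have e2 : ν.fst (B i) • μ₂ = ((ν.fst.prod μ₂).restrict (Prod.fst ⁻¹' B i)).map Prod.snd := by
    rw [← prod_univ, ← Measure.prod_restrict, Measure.restrict_univ, Measure.map_snd_prod]
    simp
  rw [e2]
  exact klDiv_map_le _ _ measurable_snd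

lemma exists_partition (X : Type*) [MetricSpace X] [TopologicalSpace.SeparableSpace X]
    [MeasurableSpace X] [BorelSpace X] [Nonempty X] (δ : ℝ) (hδ : 0 < δ) :
    ∃ B : ℕ → Set X, (∀ i, MeasurableSet (B i)) ∧
      Pairwise (fun i j => Disjoint (B i) (B j)) ∧ (⋃ i, B i = univ) ∧
      ∀ i, ∀ x ∈ B i, ∀ y ∈ B i, dist x y ≤ δ := by
  let s := TopologicalSpace.denseSeq X
  refine ⟨disjointed (fun i => Metric.ball (s i) (δ / 2)), fun i => ?_, disjoint_disjointed _, ?_, ?_⟩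
  · exact MeasurableSet.disjointed (fun i => Metric.isOpen_ball.measurableSet) i
  · rw [iUnion_disjointed]
    refine eq_univ_of_forall fun x => ?_
    obtain ⟨i, hi⟩ := (TopologicalSpace.denseRange_denseSeq X).exists_dist_lt x (half_pos hδ)
    exact mem_iUnion.2 ⟨i, hi⟩
  · intro i x hx y hy
    have h1 := disjointed_subset _ i hx
    have h2 := disjointed_subset _ i hy
    simp only [Metric.mem_ball] at h1 h2
    have := dist_triangle_right x y (s i)
    linarith

lemma exists_coupling {X : Type*} [MeasurableSpace X] (c : X → X → ℝ) (ν μ : Measure X)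
    (K ε : ℝ≥0∞) (h : optCost c ν μ ≤ K) (hK : K ≠ ∞) (hε : ε ≠ 0) :
    ∃ π : Measure (X × X), π.map Prod.fst = ν ∧ π.map Prod.snd = μ ∧
      ∫⁻ p, ENNReal.ofReal (c p.1 p.2) ∂π ≤ K + ε := by
  have : optCost c ν μ < K + ε := h.trans_lt (ENNReal.lt_add_right hK hε)
  simp only [optCost, iInf_lt_iff] at this
  obtain ⟨π, ⟨h1, h2⟩, h3⟩ := this
  exact ⟨π, h1, h2, h3.le⟩

lemma optCost_le {X : Type*} [MeasurableSpace X] (c : X → X → ℝ) (ν μ : Measure X)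
    (π : Measure (X × X)) (h1 : π.map Prod.fst = ν) (h2 : π.map Prod.snd = μ) :
    optCost c ν μ ≤ ∫⁻ p, ENNReal.ofReal (c p.1 p.2) ∂π :=
  iInf₂_le π ⟨h1, h2⟩


/-- `T(C)` for a general cost, with Mathlib's `klDiv`. -/
def TransportIneq {X : Type*} [MeasurableSpace X] (C : ℝ) (c : X → X → ℝ) (μ : Measure X) : Prop :=
  ∀ ν : Measure X, IsProbabilityMeasure ν → optCost c ν μ ≤ ENNReal.ofReal C * klDiv ν μ

lemma sq_split (a b δ : ℝ) (hδ : 0 < δ) (d : ℝ) (hd : 0 ≤ d) (h : d ≤ a + b) (ha : 0 ≤ a)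
    (haδ : a ≤ δ) : d ^ 2 ≤ (δ ^ 2 + δ) + (1 + δ) * b ^ 2 := by
  have h1 : d ^ 2 ≤ (a + b) ^ 2 := by gcongr
  have h2 : (a - δ * b) ^ 2 ≥ 0 := sq_nonneg _
  have h3 : a ^ 2 ≤ δ ^ 2 := by gcongr
  have h4 : 2 * a * b * δ ≤ δ * (δ + δ * b ^ 2) := by nlinarith
  have h5 : 2 * a * b ≤ δ + δ * b ^ 2 := by
    by_contra hcon
    push Not at hcon
    nlinarith
  nlinarith

section tensor
set_option linter.unusedSectionVars false
variable {X Y : Type*} [MetricSpace X] [TopologicalSpace.SeparableSpace X]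
    [MeasurableSpace X] [BorelSpace X] [MeasurableSpace Y] [StandardBorelSpace Y] [Nonempty Y]

/-- lifting a coupling of the second coordinates to a cell -/
lemma exists_lift (N : Measure (X × Y)) [IsFiniteMeasure N] (m : ℝ≥0∞) (π : Measure (Y × Y))
    [IsFiniteMeasure π] (h : N.map Prod.snd = m • π.map Prod.fst) :
    ∃ A : Measure ((X × Y) × Y), IsFiniteMeasure A ∧ A.map Prod.fst = N ∧
      A.map (fun q => (q.1.2, q.2)) = m • π := by
  refine ⟨N ⊗ₘ (π.condKernel.comap Prod.snd measurable_snd), inferInstance, ?_, ?_⟩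
  · exact Measure.fst_compProd _ _
  · have e : π = π.fst ⊗ₘ π.condKernel := (π.disintegrate π.condKernel).symm
    have hm : Measurable (fun q : (X × Y) × Y => (q.1.2, q.2)) := by fun_prop
    ext s hs
    rw [Measure.map_apply hm hs, Measure.compProd_apply (hm hs), Measure.smul_apply]
    conv_rhs => rw [e]
    rw [Measure.compProd_apply hs, ← lintegral_smul_measure, Measure.fst, ← h,
      lintegral_map (Kernel.measurable_kernel_prodMk_left hs) measurable_snd]
    rfl

lemma tensor_aux (C : ℝ) (c : Y → Y → ℝ) (hc : Measurable (fun p : Y × Y => c p.1 p.2))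
    (hc0 : ∀ x y, 0 ≤ c x y)
    (μ₁ : Measure X) (μ₂ : Measure Y) [IsProbabilityMeasure μ₁] [IsProbabilityMeasure μ₂]
    (hT1 : TransportIneq C (fun x y => dist x y ^ 2) μ₁) (hT2 : TransportIneq C c μ₂)
    (ν : Measure (X × Y)) [IsProbabilityMeasure ν] (hH : klDiv ν (μ₁.prod μ₂) ≠ ∞)
    (δ : ℝ) (hδ : 0 < δ) :
    optCost (fun p q => dist p.1 q.1 ^ 2 + c p.2 q.2) ν (μ₁.prod μ₂) ≤
      ENNReal.ofReal (δ ^ 2 + δ) + ENNReal.ofReal (1 + δ) *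
        (ENNReal.ofReal C * klDiv ν (μ₁.prod μ₂) + 2 * ENNReal.ofReal δ) := by
  have : Nonempty X := by
    have : Nonempty (X × Y) := nonempty_of_isProbabilityMeasure ν
    exact this.map Prod.fst
  obtain ⟨B, hB, hd, hU, hdiam⟩ := exists_partition X δ hδ
  have hsuper := entropy_superadd ν μ₁ μ₂ B hB hd hU
  set D := ENNReal.ofReal δ with hD
  have hD0 : D ≠ 0 := by simpa [hD] using hδ
  set S : ℕ → Set (X × Y) := fun i => Prod.fst ⁻¹' B i with hS
  have hSm : ∀ i, MeasurableSet (S i) := fun i => measurable_fst (hB i)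
  set m : ℕ → ℝ≥0∞ := fun i => ν.fst (B i) with hm
  have hmtop : ∀ i, m i ≠ ∞ := fun i => measure_ne_top _ _
  have hmS : ∀ i, ν (S i) = m i := fun i => (Measure.fst_apply (hB i)).symm
  have hmsum : ∑' i, m i = 1 := by
    rw [hm, ← measure_iUnion hd hB, hU, measure_univ]
  set E : ℕ → ℝ≥0∞ := fun i => klDiv ((ν.restrict (S i)).map Prod.snd) (m i • μ₂) with hE
  have hEtop : ∑' i, E i ≠ ∞ := ne_top_of_le_ne_top hH (le_trans le_add_self hsuper)
  have hH1 : klDiv ν.fst μ₁ ≠ ∞ := ne_top_of_le_ne_top hH (le_trans le_self_add hsuper)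
  -- first coupling
  obtain ⟨π₁, hπf, hπs, hπc⟩ := exists_coupling _ _ _ _ D (hT1 ν.fst inferInstance)
    (ENNReal.mul_ne_top ENNReal.ofReal_ne_top hH1) hD0
  have hπp : IsProbabilityMeasure π₁ := by
    have : IsProbabilityMeasure (π₁.map Prod.fst) := by rw [hπf]; infer_instance
    exact Measure.isProbabilityMeasure_of_map Prod.fst
  -- cell couplings
  have hcell : ∀ i, ∃ π : Measure (Y × Y), IsProbabilityMeasure π ∧
      (ν.restrict (S i)).map Prod.snd = m i • π.map Prod.fst ∧ π.map Prod.snd = μ₂ ∧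
      m i * ∫⁻ p, ENNReal.ofReal (c p.1 p.2) ∂π ≤ ENNReal.ofReal C * E i + m i * D := by
    intro i
    by_cases h0 : m i = 0
    · refine ⟨μ₂.prod μ₂, inferInstance, ?_, ?_, ?_⟩
      · have : ν.restrict (S i) = 0 := by rw [Measure.restrict_eq_zero, hmS, h0]
        simp [this, h0]
      · rw [Measure.map_snd_prod]; simp
      · simp [h0]
    set νi : Measure Y := (m i)⁻¹ • (ν.restrict (S i)).map Prod.snd with hνi
    have hνp : IsProbabilityMeasure νi := by
      constructor
      rw [hνi, Measure.smul_apply, Measure.map_apply measurable_snd MeasurableSet.univ]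
      simp only [preimage_univ, Measure.restrict_apply_univ, hmS, smul_eq_mul]
      exact ENNReal.inv_mul_cancel h0 (hmtop i)
    have hsm : (ν.restrict (S i)).map Prod.snd = m i • νi := by
      rw [hνi, smul_smul, ENNReal.mul_inv_cancel h0 (hmtop i), one_smul]
    have hEi : E i = m i * klDiv νi μ₂ := by
      rw [hE]
      simp only
      rw [hsm]
      have := klDiv_smul_same (μ := νi) (ν := μ₂) (m i).toNNReal
      rw [ENNReal.coe_toNNReal (hmtop i)] at this
      rw [← this]
      have h2 : ∀ ρ : Measure Y, (m i).toNNReal • ρ = m i • ρ := fun ρ => by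
        conv_rhs => rw [← ENNReal.coe_toNNReal (hmtop i)]
        rfl
      rw [h2, h2]
    have hk : klDiv νi μ₂ ≠ ∞ := by
      intro h
      have h3 : E i = ∞ := by rw [hEi, h, ENNReal.mul_top h0]
      exact hEtop (ENNReal.tsum_eq_top_of_eq_top ⟨i, h3⟩)
    obtain ⟨π, h1, h2, h3⟩ := exists_coupling _ _ _ _ D (hT2 νi hνp)
      (ENNReal.mul_ne_top ENNReal.ofReal_ne_top hk) hD0
    have hpp : IsProbabilityMeasure π := by
      have : IsProbabilityMeasure (π.map Prod.fst) := by rw [h1]; infer_instance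
      exact Measure.isProbabilityMeasure_of_map Prod.fst
    refine ⟨π, hpp, by rw [h1, hsm], h2, ?_⟩
    calc m i * ∫⁻ p, ENNReal.ofReal (c p.1 p.2) ∂π
        ≤ m i * (ENNReal.ofReal C * klDiv νi μ₂ + D) := by gcongr
      _ = _ := by rw [hEi]; ring
  choose π hπi hπ1 hπ2 hπ3 using hcell
  have hl := fun i => exists_lift (ν.restrict (S i)) (m i) (π i) (hπ1 i)
  choose A hAf hA1 hA2 using hl
  set P : ℕ → Measure (X × X) := fun i => π₁.restrict (Prod.fst ⁻¹' B i) with hP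
  have hPmass : ∀ i, P i univ = m i := by
    intro i
    rw [hP, Measure.restrict_apply_univ, ← Measure.map_apply measurable_fst (hB i), hπf]
  have hAmass : ∀ i, A i univ = m i := by
    intro i
    have : (A i).map Prod.fst univ = m i := by rw [hA1, Measure.restrict_apply_univ, hmS]
    rwa [Measure.map_apply measurable_fst MeasurableSet.univ, preimage_univ] at this
  set M : ℕ → Measure (((X × Y) × Y) × (X × X)) := fun i => (m i)⁻¹ • (A i).prod (P i) with hM
  set g : ((X × Y) × Y) × (X × X) → (X × Y) × (X × Y) := fun z => (z.1.1, (z.2.2, z.1.2)) with hg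
  have hgm : Measurable g := by fun_prop
  have hMfst : ∀ i, (M i).map Prod.fst = A i := by
    intro i
    rw [hM, Measure.map_smul, Measure.map_fst_prod, hPmass]
    by_cases h0 : m i = 0
    · have : A i = 0 := by rw [← Measure.measure_univ_eq_zero, hAmass, h0]
      simp [this]
    · rw [smul_smul, ENNReal.inv_mul_cancel h0 (hmtop i), one_smul]
  have hMsnd : ∀ i, (M i).map Prod.snd = P i := by
    intro i
    rw [hM, Measure.map_smul, Measure.map_snd_prod, hAmass]
    by_cases h0 : m i = 0
    · have : P i = 0 := by rw [← Measure.measure_univ_eq_zero, hPmass, h0]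
      simp [this]
    · rw [smul_smul, ENNReal.inv_mul_cancel h0 (hmtop i), one_smul]
  have hMy : ∀ i, (M i).map (fun z => (z.2.2, z.1.2)) = ((P i).map Prod.snd).prod μ₂ := by
    intro i
    have hA3 : (A i).map Prod.snd = m i • μ₂ := by
      have : (Prod.snd : (X × Y) × Y → Y) = Prod.snd ∘ (fun q => (q.1.2, q.2)) := rfl
      rw [this, ← Measure.map_map measurable_snd (by fun_prop), hA2, Measure.map_smul, hπ2]
    have e1 : (fun z : ((X × Y) × Y) × (X × X) => (z.2.2, z.1.2)) =
        Prod.swap ∘ Prod.map Prod.snd Prod.snd := rfl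
    rw [hM, Measure.map_smul, e1, ← Measure.map_map measurable_swap (by fun_prop),
      ← Measure.map_prod_map _ _ measurable_snd measurable_snd, Measure.prod_swap, hA3,
      Measure.prod_smul_right]
    by_cases h0 : m i = 0
    · have : P i = 0 := by rw [← Measure.measure_univ_eq_zero, hPmass, h0]
      simp [this]
    · rw [smul_smul, ENNReal.inv_mul_cancel h0 (hmtop i), one_smul]
  refine (optCost_le _ _ _ ((Measure.sum M).map g) ?_ ?_).trans ?_
  · rw [Measure.map_map measurable_fst hgm, Measure.map_sum (by fun_prop)]
    have : ∀ i, (M i).map (Prod.fst ∘ g) = ν.restrict (S i) := by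
      intro i
      have e : Prod.fst ∘ g = Prod.fst ∘ Prod.fst := rfl
      rw [e, ← Measure.map_map measurable_fst measurable_fst, hMfst, hA1]
    simp only [this]
    rw [← Measure.restrict_iUnion (fun i j hij => (hd hij).preimage _) hSm,
      ← preimage_iUnion, hU, preimage_univ, Measure.restrict_univ]
  · rw [Measure.map_map measurable_snd hgm, Measure.map_sum (by fun_prop)]
    have : ∀ i, (M i).map (Prod.snd ∘ g) = ((P i).map Prod.snd).prod μ₂ := hMy
    simp only [this]
    rw [← Measure.prod_sum_left, ← Measure.map_sum (by fun_prop), hP,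
      ← Measure.restrict_iUnion (fun i j hij => (hd hij).preimage _)
        (fun i => measurable_fst (hB i)),
      ← preimage_iUnion, hU, preimage_univ, Measure.restrict_univ, hπs]
  -- the cost
  have hmd : Measurable (fun p : X × X => ENNReal.ofReal (dist p.1 p.2 ^ 2)) := by
    have := (continuous_dist (α := X)).measurable
    exact (this.pow_const 2).ennreal_ofReal
  have hcm := hc.ennreal_ofReal
  have hcost : ∀ i, ∫⁻ z, ENNReal.ofReal (dist (g z).1.1 (g z).2.1 ^ 2 + c (g z).1.2 (g z).2.2) ∂(M i)
      ≤ ENNReal.ofReal (δ ^ 2 + δ) * m i +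
        ENNReal.ofReal (1 + δ) * ∫⁻ p, ENNReal.ofReal (dist p.1 p.2 ^ 2) ∂(P i) +
        m i * ∫⁻ p, ENNReal.ofReal (c p.1 p.2) ∂(π i) := by
    intro i
    have hae1 : ∀ᵐ z ∂(M i), z.1.1.1 ∈ B i := by
      have h1 : ∀ᵐ w ∂(ν.restrict (S i)), w.1 ∈ B i := ae_restrict_mem (hSm i)
      rw [← hA1 i, ← hMfst i] at h1
      exact ae_of_ae_map measurable_fst.aemeasurable
        (ae_of_ae_map measurable_fst.aemeasurable h1)
    have hae2 : ∀ᵐ z ∂(M i), z.2.1 ∈ B i := by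
      have h1 : ∀ᵐ w ∂(P i), w.1 ∈ B i := ae_restrict_mem (measurable_fst (hB i))
      rw [← hMsnd i] at h1
      exact ae_of_ae_map measurable_snd.aemeasurable h1
    have hMmass : M i univ = m i := by
      have := hPmass i
      rwa [← hMsnd i, Measure.map_apply measurable_snd MeasurableSet.univ, preimage_univ] at this
    have hf1 : ∫⁻ z, ENNReal.ofReal (dist z.2.1 z.2.2 ^ 2) ∂(M i) =
        ∫⁻ p, ENNReal.ofReal (dist p.1 p.2 ^ 2) ∂(P i) := by
      rw [← hMsnd i, lintegral_map hmd measurable_snd]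
    have hf2 : ∫⁻ z, ENNReal.ofReal (c z.1.1.2 z.1.2) ∂(M i) =
        m i * ∫⁻ p, ENNReal.ofReal (c p.1 p.2) ∂(π i) := by
      rw [← smul_eq_mul, ← lintegral_smul_measure, ← hA2 i, ← hMfst i,
        lintegral_map hcm (by fun_prop)]
      exact (lintegral_map (hcm.comp (by fun_prop :
        Measurable (fun q : (X × Y) × Y => (q.1.2, q.2)))) measurable_fst).symm
    calc _ ≤ ∫⁻ z, ((ENNReal.ofReal (δ ^ 2 + δ) + ENNReal.ofReal (1 + δ) *
            ENNReal.ofReal (dist z.2.1 z.2.2 ^ 2)) + ENNReal.ofReal (c z.1.1.2 z.1.2)) ∂(M i) := by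
          refine lintegral_mono_ae ?_
          filter_upwards [hae1, hae2] with z h1 h2
          rw [← ENNReal.ofReal_mul (by positivity), ← ENNReal.ofReal_add (by positivity)
            (by positivity), ← ENNReal.ofReal_add (by positivity) (hc0 _ _)]
          refine ENNReal.ofReal_le_ofReal ?_
          have := sq_split (dist z.1.1.1 z.2.1) (dist z.2.1 z.2.2) δ hδ (dist z.1.1.1 z.2.2)
            dist_nonneg (dist_triangle _ _ _) dist_nonneg (hdiam i _ h1 _ h2)
          simp only [hg]
          linarith
      _ = _ := by
          have hm1 : Measurable (fun z : ((X × Y) × Y) × (X × X) =>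
              ENNReal.ofReal (c z.1.1.2 z.1.2)) := hcm.comp (by fun_prop :
              Measurable (fun z : ((X × Y) × Y) × (X × X) => (z.1.1.2, z.1.2)))
          have hm2 : Measurable (fun z : ((X × Y) × Y) × (X × X) =>
              ENNReal.ofReal (dist z.2.1 z.2.2 ^ 2)) := hmd.comp measurable_snd
          rw [lintegral_add_right _ hm1, hf2,
            lintegral_add_left measurable_const, lintegral_const, hMmass,
            lintegral_const_mul _ hm2, hf1]
  have hgc : Measurable (fun p : (X × Y) × (X × Y) =>
      ENNReal.ofReal (dist p.1.1 p.2.1 ^ 2 + c p.1.2 p.2.2)) := by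
    have h1 : Measurable (fun p : (X × Y) × (X × Y) => dist p.1.1 p.2.1) :=
      (continuous_dist (α := X)).measurable.comp
        (by fun_prop : Measurable (fun p : (X × Y) × (X × Y) => (p.1.1, p.2.1)))
    have h2 : Measurable (fun p : (X × Y) × (X × Y) => c p.1.2 p.2.2) :=
      hc.comp (by fun_prop : Measurable (fun p : (X × Y) × (X × Y) => (p.1.2, p.2.2)))
    exact ((h1.pow_const 2).add h2).ennreal_ofReal
  rw [lintegral_map hgc hgm, lintegral_sum_measure]
  have hPs : ∑' i, ∫⁻ p, ENNReal.ofReal (dist p.1 p.2 ^ 2) ∂(P i) =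
      ∫⁻ p, ENNReal.ofReal (dist p.1 p.2 ^ 2) ∂π₁ := by
    rw [← lintegral_sum_measure, hP, ← Measure.restrict_iUnion (fun i j hij => (hd hij).preimage _)
        (fun i => measurable_fst (hB i)),
      ← preimage_iUnion, hU, preimage_univ, Measure.restrict_univ]
  have h1δ : (1 : ℝ≥0∞) ≤ ENNReal.ofReal (1 + δ) := by
    rw [← ENNReal.ofReal_one]; exact ENNReal.ofReal_le_ofReal (by linarith)
  calc _ ≤ ∑' i, (ENNReal.ofReal (δ ^ 2 + δ) * m i +
        ENNReal.ofReal (1 + δ) * ∫⁻ p, ENNReal.ofReal (dist p.1 p.2 ^ 2) ∂(P i) +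
        (ENNReal.ofReal C * E i + m i * D)) :=
        ENNReal.tsum_le_tsum fun i => (hcost i).trans (by gcongr; exact hπ3 i)
    _ = ENNReal.ofReal (δ ^ 2 + δ) + ENNReal.ofReal (1 + δ) *
          ∫⁻ p, ENNReal.ofReal (dist p.1 p.2 ^ 2) ∂π₁ + 1 * (ENNReal.ofReal C * ∑' i, E i + D) := by
        rw [ENNReal.tsum_add, ENNReal.tsum_add, ENNReal.tsum_add, ENNReal.tsum_mul_left,
          ENNReal.tsum_mul_left, ENNReal.tsum_mul_left, ENNReal.tsum_mul_right, hmsum, hPs]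
        simp
    _ ≤ ENNReal.ofReal (δ ^ 2 + δ) + ENNReal.ofReal (1 + δ) *
          (ENNReal.ofReal C * klDiv ν.fst μ₁ + D) +
          ENNReal.ofReal (1 + δ) * (ENNReal.ofReal C * ∑' i, E i + D) := by
        gcongr
    _ = ENNReal.ofReal (δ ^ 2 + δ) + ENNReal.ofReal (1 + δ) *
        (ENNReal.ofReal C * (klDiv ν.fst μ₁ + ∑' i, E i) + 2 * D) := by ring
    _ ≤ _ := by gcongr

lemma tensor (C : ℝ) (hC : 0 < C) (c : Y → Y → ℝ) (hc : Measurable (fun p : Y × Y => c p.1 p.2))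
    (hc0 : ∀ x y, 0 ≤ c x y)
    (μ₁ : Measure X) (μ₂ : Measure Y) [IsProbabilityMeasure μ₁] [IsProbabilityMeasure μ₂]
    (hT1 : TransportIneq C (fun x y => dist x y ^ 2) μ₁) (hT2 : TransportIneq C c μ₂) :
    TransportIneq C (fun p q => dist p.1 q.1 ^ 2 + c p.2 q.2) (μ₁.prod μ₂) := by
  intro ν hν
  by_cases hH : klDiv ν (μ₁.prod μ₂) = ∞
  · rw [hH, ENNReal.mul_top (by simpa using hC)]; exact le_top
  have key := tensor_aux C c hc hc0 μ₁ μ₂ hT1 hT2 ν hH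
  set K := ENNReal.ofReal C * klDiv ν (μ₁.prod μ₂) with hK
  have hKt : K ≠ ∞ := ENNReal.mul_ne_top ENNReal.ofReal_ne_top hH
  have h1 : Filter.Tendsto (fun δ : ℝ => ENNReal.ofReal (δ ^ 2 + δ + (1 + δ) * (K.toReal + 2 * δ)))
      (nhdsWithin 0 (Ioi 0)) (nhds K) := by
    have : Continuous (fun δ : ℝ =>
        ENNReal.ofReal (δ ^ 2 + δ + (1 + δ) * (K.toReal + 2 * δ))) :=
      ENNReal.continuous_ofReal.comp (by fun_prop)
    have h2 := this.tendsto 0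
    simp only [ne_eq, OfNat.ofNat_ne_zero, not_false_eq_true, zero_pow, add_zero, mul_zero,
      one_mul, zero_add, ENNReal.ofReal_toReal hKt] at h2
    exact h2.mono_left nhdsWithin_le_nhds
  refine ge_of_tendsto h1 ?_
  filter_upwards [self_mem_nhdsWithin] with δ hδ
  have hδ : 0 < δ := hδ
  have hk0 : 0 ≤ K.toReal := ENNReal.toReal_nonneg
  refine (key δ hδ).trans (le_of_eq ?_)
  rw [ENNReal.ofReal_add (p := δ ^ 2 + δ) (q := (1 + δ) * (K.toReal + 2 * δ)) (by positivity)
    (by positivity), ENNReal.ofReal_mul (by positivity), ENNReal.ofReal_add hk0 (by positivity), ENNReal.ofReal_toReal hKt,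
    ENNReal.ofReal_mul (by norm_num)]
  simp
end tensor


lemma TransportIneq.of_equiv {X Y : Type*} [MeasurableSpace X] [MeasurableSpace Y] (e : X ≃ᵐ Y)
    (C : ℝ) (cX : X → X → ℝ) (cY : Y → Y → ℝ) (hcc : ∀ x y, cX x y = cY (e x) (e y))
    (μ : Measure X) [IsProbabilityMeasure μ] (h : TransportIneq C cY (μ.map e)) :
    TransportIneq C cX μ := by
  intro ν hν
  have h1 := h (ν.map e) (Measure.isProbabilityMeasure_map e.measurable.aemeasurable)
  have h2 : klDiv (ν.map e) (μ.map e) ≤ klDiv ν μ := klDiv_map_le _ _ e.measurable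
  refine le_trans ?_ (h1.trans (by gcongr))
  refine le_iInf₂ fun π hπ => ?_
  have hm : Measurable (fun p : Y × Y => (e.symm p.1, e.symm p.2)) := by fun_prop
  have hs : ∀ ρ : Measure X, (ρ.map e).map e.symm = ρ := fun ρ => by
    rw [Measure.map_map e.symm.measurable e.measurable]; simp
  refine (optCost_le cX ν μ (π.map (fun p => (e.symm p.1, e.symm p.2))) ?_ ?_).trans ?_
  · rw [Measure.map_map measurable_fst hm, ← hs ν, ← hπ.1,
      Measure.map_map e.symm.measurable measurable_fst]
    rfl
  · rw [Measure.map_map measurable_snd hm, ← hs μ, ← hπ.2,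
      Measure.map_map e.symm.measurable measurable_snd]
    rfl
  · refine (lintegral_map_equiv _ (MeasurableEquiv.prodCongr e.symm e.symm)).le.trans ?_
    refine lintegral_mono fun p => ?_
    change ENNReal.ofReal (cX (e.symm p.1) (e.symm p.2)) ≤ _
    simp [hcc]

lemma l2ProdDist_sq {X : Type*} [MetricSpace X] {n : ℕ} (x y : Fin n → X) :
    l2ProdDist x y ^ 2 = ∑ i, dist (x i) (y i) ^ 2 :=
  Real.sq_sqrt (Finset.sum_nonneg fun _ _ => sq_nonneg _)

lemma l2ProdDist_eq {X : Type*} [MetricSpace X] {n : ℕ} (x y : Fin n → X) :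
    l2ProdDist x y = dist (WithLp.toLp 2 x : PiLp 2 (fun _ : Fin n => X)) (WithLp.toLp 2 y) := by
  rw [PiLp.dist_eq_sum (by norm_num), l2ProdDist, Real.sqrt_eq_rpow]
  simp

section conc
variable {X : Type*} [MetricSpace X] [CompleteSpace X] [TopologicalSpace.SeparableSpace X]
    [MeasurableSpace X] [BorelSpace X]
set_option linter.unusedSectionVars false

lemma measurable_l2ProdDist (n : ℕ) :
    Measurable (fun p : (Fin n → X) × (Fin n → X) => l2ProdDist p.1 p.2) := by
  unfold l2ProdDist
  refine Measurable.sqrt (Finset.measurable_sum _ fun i _ => Measurable.pow_const ?_ 2)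
  exact (continuous_dist (α := X)).measurable.comp
    (by fun_prop : Measurable (fun p : (Fin n → X) × (Fin n → X) => (p.1 i, p.2 i)))

lemma transportIneq_pi (C : ℝ) (hC : 0 < C) (μ : Measure X) [IsProbabilityMeasure μ]
    (hT : TransportIneq C (fun x y => dist x y ^ 2) μ) (n : ℕ) :
    TransportIneq C (fun x y => l2ProdDist x y ^ 2) (Measure.pi fun _ : Fin n => μ) := by
  have : Nonempty X := nonempty_of_isProbabilityMeasure μ
  have : StandardBorelSpace X := by
    have : PolishSpace X := inferInstance
    infer_instance
  induction n with
  | zero =>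
    intro ν hν
    refine (optCost_le _ _ _ (ν.prod (Measure.pi fun _ : Fin 0 => μ)) ?_ ?_).trans ?_
    · rw [Measure.map_fst_prod]; simp
    · rw [Measure.map_snd_prod]; simp
    · simp [l2ProdDist]
  | succ n ih =>
    have h1 := tensor C hC _ ((measurable_l2ProdDist (X := X) n).pow_const 2)
      (fun _ _ => sq_nonneg _) μ (Measure.pi fun _ : Fin n => μ) hT ih
    have h2 := (measurePreserving_piFinSuccAbove (fun _ : Fin (n + 1) => μ) 0).map_eq
    rw [← h2] at h1
    refine TransportIneq.of_equiv _ C _ _ ?_ _ h1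
    intro x y
    simp only [l2ProdDist_sq, Fin.sum_univ_succ]
    rfl

lemma lintegral_le_of_sq {Z : Type*} [MeasurableSpace Z] (π : Measure Z) [IsProbabilityMeasure π]
    (D : Z → ℝ) (hD : Measurable D) (k : ℝ) (hk : 0 < k)
    (h : ∫⁻ z, ENNReal.ofReal (D z ^ 2) ∂π ≤ ENNReal.ofReal (k ^ 2)) :
    ∫⁻ z, ENNReal.ofReal (D z) ∂π ≤ ENNReal.ofReal k := by
  have hm : Measurable (fun z => ENNReal.ofReal (D z ^ 2)) := (hD.pow_const 2).ennreal_ofReal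
  calc ∫⁻ z, ENNReal.ofReal (D z) ∂π
      ≤ ∫⁻ z, (ENNReal.ofReal (1 / (2 * k)) * ENNReal.ofReal (D z ^ 2) +
          ENNReal.ofReal (k / 2)) ∂π := by
        refine lintegral_mono fun z => ?_
        simp only
        rw [← ENNReal.ofReal_mul (by positivity), ← ENNReal.ofReal_add (by positivity)
          (by positivity)]
        refine ENNReal.ofReal_le_ofReal ?_
        have : 1 / (2 * k) * D z ^ 2 + k / 2 - D z = (D z - k) ^ 2 / (2 * k) := by
          field_simp; ring
        have h2 : 0 ≤ (D z - k) ^ 2 / (2 * k) := by positivity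
        linarith
    _ = ENNReal.ofReal (1 / (2 * k)) * ∫⁻ z, ENNReal.ofReal (D z ^ 2) ∂π +
          ENNReal.ofReal (k / 2) := by
        rw [lintegral_add_right _ measurable_const, lintegral_const_mul _ hm]; simp
    _ ≤ ENNReal.ofReal (1 / (2 * k)) * ENNReal.ofReal (k ^ 2) + ENNReal.ofReal (k / 2) := by
        gcongr
    _ = ENNReal.ofReal k := by
        rw [← ENNReal.ofReal_mul (by positivity), ← ENNReal.ofReal_add (by positivity)
          (by positivity)]
        congr 1
        field_simp; norm_num

lemma klDiv_cond {Z : Type*} [MeasurableSpace Z] (μ : Measure Z) [IsProbabilityMeasure μ]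
    (A : Set Z) (hA : MeasurableSet A) (h0 : μ A ≠ 0) :
    klDiv (cond μ A) μ = ENNReal.ofReal (Real.log (μ.real A)⁻¹) := by
  have hp : IsProbabilityMeasure (cond μ A) := cond_isProbabilityMeasure h0
  have hac : cond μ A ≪ μ := cond_absolutelyContinuous
  have hr : (cond μ A).rnDeriv μ =ᵐ[μ] A.indicator (fun _ => (μ A)⁻¹) := by
    have e : cond μ A = μ.withDensity (A.indicator (fun _ => (μ A)⁻¹)) := by
      rw [withDensity_indicator hA, withDensity_const]; rfl
    conv_lhs => rw [e]
    exact Measure.rnDeriv_withDensity _ (measurable_const.indicator hA)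
  have hl : llr (cond μ A) μ =ᵐ[cond μ A] fun _ => Real.log (μ.real A)⁻¹ := by
    filter_upwards [hac.ae_le hr, ae_cond_mem hA] with x hx hxA
    rw [llr, hx, indicator_of_mem hxA]
    simp [Measure.real]
  have hInt : Integrable (llr (cond μ A) μ) (cond μ A) :=
    (integrable_congr hl).2 (integrable_const _)
  rw [klDiv_of_ac_of_integrable hac hInt, integral_congr_ae hl]
  simp

lemma exists_L1_coupling {n : ℕ} (C : ℝ) (hC : 0 < C) (m : Measure (Fin n → X))
    [IsProbabilityMeasure m]
    (hT : TransportIneq C (fun x y => l2ProdDist x y ^ 2) m) (A : Set (Fin n → X))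
    (hA : MeasurableSet A) (h0 : m A ≠ 0) (k : ℝ)
    (hk : Real.sqrt (C * Real.log (m.real A)⁻¹) < k) :
    ∃ π : Measure ((Fin n → X) × (Fin n → X)), IsProbabilityMeasure π ∧
      (∀ᵐ z ∂π, z.1 ∈ A) ∧ π.map Prod.snd = m ∧
      ∫⁻ z, ENNReal.ofReal (l2ProdDist z.1 z.2) ∂π ≤ ENNReal.ofReal k := by
  have hp : IsProbabilityMeasure (cond m A) := cond_isProbabilityMeasure h0
  have hk0 : 0 < k := (Real.sqrt_nonneg _).trans_lt hk
  have hlt : C * Real.log (m.real A)⁻¹ < k ^ 2 := (Real.sqrt_lt' hk0).1 hk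
  have h1 := hT (cond m A) hp
  rw [klDiv_cond m A hA h0, ← ENNReal.ofReal_mul hC.le] at h1
  have h2 : optCost (fun x y => l2ProdDist x y ^ 2) (cond m A) m < ENNReal.ofReal (k ^ 2) :=
    h1.trans_lt ((ENNReal.ofReal_lt_ofReal_iff (by positivity)).2 hlt)
  simp only [optCost, iInf_lt_iff] at h2
  obtain ⟨π, ⟨h3, h4⟩, h5⟩ := h2
  have hpp : IsProbabilityMeasure π := by
    have : IsProbabilityMeasure (π.map Prod.fst) := by rw [h3]; infer_instance
    exact Measure.isProbabilityMeasure_of_map Prod.fst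
  refine ⟨π, hpp, ?_, h4, lintegral_le_of_sq π _ (measurable_l2ProdDist n) k hk0 h5.le⟩
  have := ae_cond_mem (μ := m) hA
  rw [← h3] at this
  exact ae_of_ae_map measurable_fst.aemeasurable this

lemma concentration {n : ℕ} (C : ℝ) (hC : 0 < C) (m : Measure (Fin n → X))
    [IsProbabilityMeasure m]
    (hT : TransportIneq C (fun x y => l2ProdDist x y ^ 2) m) (A : Set (Fin n → X))
    (hA : MeasurableSet A) (hA2 : (1 / 2 : ℝ≥0∞) ≤ m A) (r : ℝ)
    (hr : Real.sqrt (C * Real.log 2) ≤ r) :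
    1 - ENNReal.ofReal (Real.exp (-(r - Real.sqrt (C * Real.log 2)) ^ 2 / C)) ≤
      m {x | sInf ((fun y => l2ProdDist x y) '' A) ≤ r} := by
  have hA0 : m A ≠ 0 := by
    intro h; rw [h] at hA2; simp at hA2
  have hne : A.Nonempty := nonempty_of_measure_ne_zero hA0
  set T : (Fin n → X) → PiLp 2 (fun _ : Fin n => X) := WithLp.toLp 2 with hTdef
  set φ : (Fin n → X) → ℝ := fun x => Metric.infDist (T x) (T '' A) with hφ
  have hφeq : ∀ x, sInf ((fun y => l2ProdDist x y) '' A) = φ x := by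
    intro x
    rw [hφ]
    simp only
    rw [Metric.infDist_eq_iInf, iInf]
    congr 1
    ext t
    simp only [mem_image, mem_range, Subtype.exists, l2ProdDist_eq]
    constructor
    · rintro ⟨y, hy, rfl⟩; exact ⟨T y, ⟨y, hy, rfl⟩, rfl⟩
    · rintro ⟨_, ⟨y, hy, rfl⟩, rfl⟩; exact ⟨y, hy, rfl⟩
  have hφc : Continuous φ :=
    (Metric.continuous_infDist_pt _).comp (PiLp.continuous_toLp 2 _)
  have hφm : Measurable φ := hφc.measurable
  have hφtri : ∀ x y, φ x ≤ φ y + l2ProdDist x y := fun x y => by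
    rw [l2ProdDist_eq]; exact Metric.infDist_le_infDist_add_dist
  have hφA : ∀ x ∈ A, φ x = 0 := fun x hx => Metric.infDist_zero_of_mem ⟨x, hx, rfl⟩
  have hφ0 : ∀ x, 0 ≤ φ x := fun x => Metric.infDist_nonneg
  have hl0 : ∀ x y : Fin n → X, 0 ≤ l2ProdDist x y := fun x y => Real.sqrt_nonneg _
  have hsymm : ∀ x y : Fin n → X, l2ProdDist x y = l2ProdDist y x := fun x y => by
    rw [l2ProdDist_eq, l2ProdDist_eq, dist_comm]
  simp only [hφeq]
  set r₀ := Real.sqrt (C * Real.log 2) with hr0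
  set S : Set (Fin n → X) := {x | φ x ≤ r} with hS
  have hSm : MeasurableSet S := measurableSet_le hφm measurable_const
  have hcompl : m S = 1 - m Sᶜ := by
    rw [← prob_compl_eq_one_sub hSm.compl, compl_compl]
  rw [hcompl]
  refine tsub_le_tsub_left ?_ 1
  by_cases hB0 : m Sᶜ = 0
  · rw [hB0]; exact zero_le
  set b := m.real Sᶜ with hb
  have hbpos : 0 < b := ENNReal.toReal_pos hB0 (measure_ne_top _ _)
  have hb1 : b ≤ 1 := measureReal_le_one
  have ha : (1 / 2 : ℝ) ≤ m.real A := by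
    have := ENNReal.toReal_mono (measure_ne_top m A) hA2
    simpa [Measure.real] using this
  have hk1 : Real.sqrt (C * Real.log (m.real A)⁻¹) ≤ r₀ := by
    refine Real.sqrt_le_sqrt ?_
    gcongr
    rw [inv_le_comm₀ (by linarith) (by norm_num)]
    linarith
  have key : ∀ k₁ k₂, r₀ < k₁ → Real.sqrt (C * Real.log b⁻¹) < k₂ → r ≤ k₁ + k₂ := by
    intro k₁ k₂ h1 h2
    have hk10 : 0 < k₁ := (Real.sqrt_nonneg _).trans_lt h1
    have hk20 : 0 < k₂ := (Real.sqrt_nonneg _).trans_lt h2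
    obtain ⟨π, hπ, hπA, hπm, hπc⟩ := exists_L1_coupling C hC m hT A hA hA0 k₁ (hk1.trans_lt h1)
    obtain ⟨ρ, hρ, hρB, hρm, hρc⟩ := exists_L1_coupling C hC m hT Sᶜ hSm.compl hB0 k₂ h2
    have e1 : ∫⁻ x, ENNReal.ofReal (φ x) ∂m ≤ ENNReal.ofReal k₁ := by
      refine le_trans ?_ hπc
      rw [← hπm, lintegral_map hφm.ennreal_ofReal measurable_snd]
      refine lintegral_mono_ae ?_
      filter_upwards [hπA] with z hz
      refine ENNReal.ofReal_le_ofReal ?_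
      have := hφtri z.2 z.1
      rw [hφA _ hz, hsymm] at this
      linarith
    have e2 : ENNReal.ofReal r ≤ ENNReal.ofReal (k₁ + k₂) := by
      calc ENNReal.ofReal r = ∫⁻ _, ENNReal.ofReal r ∂ρ := by simp
        _ ≤ ∫⁻ z, (ENNReal.ofReal (φ z.2) + ENNReal.ofReal (l2ProdDist z.1 z.2)) ∂ρ := by
          refine lintegral_mono_ae ?_
          filter_upwards [hρB] with z hz
          rw [← ENNReal.ofReal_add (hφ0 _) (hl0 _ _)]
          refine ENNReal.ofReal_le_ofReal ?_
          have h3 : r < φ z.1 := not_le.1 hz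
          exact h3.le.trans (hφtri _ _)
        _ = ∫⁻ x, ENNReal.ofReal (φ x) ∂m + ∫⁻ z, ENNReal.ofReal (l2ProdDist z.1 z.2) ∂ρ := by
          rw [lintegral_add_right _ (measurable_l2ProdDist n).ennreal_ofReal]
          congr 1
          rw [← hρm, lintegral_map hφm.ennreal_ofReal measurable_snd]
        _ ≤ _ := by
          rw [ENNReal.ofReal_add hk10.le hk20.le]
          gcongr
    exact (ENNReal.ofReal_le_ofReal_iff (by positivity)).1 e2
  have hle : r ≤ r₀ + Real.sqrt (C * Real.log b⁻¹) := by
    refine le_of_forall_pos_le_add fun ε hε => ?_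
    have := key (r₀ + ε / 2) (Real.sqrt (C * Real.log b⁻¹) + ε / 2) (by linarith) (by linarith)
    linarith
  have hlog : 0 ≤ Real.log b⁻¹ := Real.log_nonneg ((one_le_inv₀ hbpos).2 hb1)
  have hsq : (r - r₀) ^ 2 ≤ C * Real.log b⁻¹ := by
    rw [← Real.sq_sqrt (mul_nonneg hC.le hlog)]
    have : 0 ≤ r - r₀ := by linarith
    gcongr
    linarith
  have hfin : b ≤ Real.exp (-(r - r₀) ^ 2 / C) := by
    rw [← Real.log_le_iff_le_exp hbpos, le_div_iff₀ hC]
    rw [Real.log_inv] at hsq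
    linarith
  rw [← ENNReal.ofReal_toReal (measure_ne_top m Sᶜ)]
  exact ENNReal.ofReal_le_ofReal hfin
end conc

end helpers

/-- Dimension-free Gaussian concentration from `T₂`: if `μ` satisfies
`W₂²(ν,μ) ≤ C H(ν|μ)` for all `ν`, then for every `n ≥ 1`:
(i) `μⁿ` satisfies `T₂(C)` on `(𝒳ⁿ, d₂)`, and
(ii) every Borel `A ⊆ 𝒳ⁿ` with `μⁿ(A) ≥ 1/2` satisfies
`μⁿ(Aʳ) ≥ 1 − exp(−(r−r₀)²/C)` for `r ≥ r₀ = √(C log 2)`, where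
`Aʳ = {x | inf_{y ∈ A} d₂(x,y) ≤ r}`. -/
theorem dimension_free_gaussian_concentration_of_T2
    {X : Type*} [MetricSpace X] [CompleteSpace X] [TopologicalSpace.SeparableSpace X]
    [MeasurableSpace X] [BorelSpace X]
    (C : ℝ) (hC : 0 < C)
    (μ : Measure X) [IsProbabilityMeasure μ]
    (hT2 : ∀ ν : Measure X, IsProbabilityMeasure ν →
      optCost (fun x y => dist x y ^ 2) ν μ ≤ ENNReal.ofReal C * relEntropy ν μ)
    (n : ℕ) (hn : 1 ≤ n) :
    (∀ ν : Measure (Fin n → X), IsProbabilityMeasure ν →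
        optCost (fun x y => l2ProdDist x y ^ 2) ν (Measure.pi fun _ : Fin n => μ) ≤
          ENNReal.ofReal C * relEntropy ν (Measure.pi fun _ : Fin n => μ)) ∧
      (∀ A : Set (Fin n → X), MeasurableSet A →
        (1 / 2 : ℝ≥0∞) ≤ (Measure.pi fun _ : Fin n => μ) A →
        ∀ r : ℝ, Real.sqrt (C * Real.log 2) ≤ r →
          1 - ENNReal.ofReal (Real.exp (-(r - Real.sqrt (C * Real.log 2)) ^ 2 / C)) ≤
            (Measure.pi fun _ : Fin n => μ)
              {x | sInf ((fun y => l2ProdDist x y) '' A) ≤ r}) := by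
  have hT : TransportIneq C (fun x y => dist x y ^ 2) μ := fun ν hν => by
    rw [← relEntropy_eq_klDiv]; exact hT2 ν hν
  have hP := transportIneq_pi C hC μ hT n
  refine ⟨fun ν hν => ?_, fun A hA hA2 r hr => ?_⟩
  · rw [relEntropy_eq_klDiv]; exact hP ν hν
  · exact concentration C hC _ hP A hA hA2 r hr
end

section
/- (Gozlan: dimension-free Gaussian concentration implies T₂) Let (𝒳,d) be a Polish metric space, μ ∈ P(𝒳), and C, K > 0. Suppose that for every integer n ≥ 1, every Borel set A ⊆ 𝒳ⁿ with μⁿ(A) ≥ 1/2 and every r ≥ 0, μⁿ(A^r) ≥ 1 − K e^{−r²/C}, where A^r is the enlargement of A for the ℓ²-product metric d₂. Then μ satisfies T₂(C): W₂²(ν,μ) ≤ C H(ν|μ) for all ν ∈ P(𝒳). -/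
open MeasureTheory ENNReal

section Gozlan

open Filter Topology ProbabilityTheory

lemma goz_wlln {X : Type*} [MeasurableSpace X] (ν : Measure X) [IsProbabilityMeasure ν]
    (g : X → ℝ) (hg : Measurable g) (hgi : Integrable g ν) (ε : ℝ) (hε : 0 < ε) :
    Tendsto (fun n : ℕ => (Measure.pi fun _ : Fin n => ν)
      {x | ε ≤ |(∑ i, g (x i)) / n - ∫ a, g a ∂ν|}) atTop (𝓝 0) := by
  let P := Measure.infinitePi (fun _ : ℕ => ν)
  have hmp : ∀ i : ℕ, MeasurePreserving (fun ω : ℕ → X => ω i) P ν := fun i =>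
    measurePreserving_eval_infinitePi (fun _ : ℕ => ν) i
  have hind : iIndepFun (fun (i : ℕ) (ω : ℕ → X) => g (ω i)) P :=
    iIndepFun_infinitePi (P := fun _ : ℕ => ν) (X := fun _ => g) (fun _ => hg)
  have hslln := strong_law_ae_real (μ := P) (fun (i : ℕ) (ω : ℕ → X) => g (ω i))
    ((hmp 0).integrable_comp_of_integrable hgi)
    (fun i j hij => hind.indepFun hij)
    (fun i => ⟨(hg.comp (measurable_pi_apply i)).aemeasurable, (hg.comp (measurable_pi_apply 0)).aemeasurable, by
      have h1 : ∀ i : ℕ, P.map (fun ω : ℕ → X => g (ω i)) = ν.map g := fun i => by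
        rw [← (hmp i).map_eq, Measure.map_map hg (by fun_prop)]; rfl
      rw [h1, h1]⟩)
  have hE : ∫ ω, g (ω 0) ∂P = ∫ a, g a ∂ν := by
    rw [← (hmp 0).map_eq, integral_map (measurable_pi_apply 0).aemeasurable hg.aestronglyMeasurable]
  have hm := tendstoInMeasure_of_tendsto_ae (μ := P)
    (f := fun (n : ℕ) (ω : ℕ → X) => (∑ i ∈ Finset.range n, g (ω i)) / n)
    (g := fun _ => ∫ ω, g (ω 0) ∂P) (fun n => by
      apply Measurable.aestronglyMeasurable; fun_prop) hslln
  rw [tendstoInMeasure_iff_dist] at hm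
  refine (hm ε hε).congr fun n => ?_
  have hmap : P.map (fun (ω : ℕ → X) (i : Fin n) => ω i) = Measure.pi fun _ : Fin n => ν := by
    rw [← Measure.infinitePi_eq_pi]
    exact Measure.map_infinitePi_infinitePi_of_inj (P := fun _ : ℕ => ν) (f := fun i : Fin n => (i : ℕ))
      Fin.val_injective
  rw [← hmap, Measure.map_apply (by fun_prop)]
  · simp only [hE, Real.dist_eq, Finset.sum_range, Set.preimage_ofPred_eq]
  · apply measurableSet_le measurable_const
    fun_prop

lemma goz_pi_withDensity {X : Type*} [MeasurableSpace X] (μ ν : Measure X) [IsProbabilityMeasure μ]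
    [IsProbabilityMeasure ν] (p : X → ℝ≥0∞) (hp : Measurable p) (h : ν = μ.withDensity p) (n : ℕ) :
    (Measure.pi fun _ : Fin n => ν) =
      (Measure.pi fun _ : Fin n => μ).withDensity (fun x => ∏ i, p (x i)) := by
  refine Measure.pi_eq fun s hs => ?_
  rw [withDensity_apply _ (MeasurableSet.univ_pi hs),
    ← lintegral_indicator (MeasurableSet.univ_pi hs)]
  have h1 : ∀ x : Fin n → X, (Set.univ.pi s).indicator (fun x => ∏ i, p (x i)) x
      = ∏ i, (s i).indicator p (x i) := by
    intro x
    by_cases hx : x ∈ Set.univ.pi s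
    · rw [Set.indicator_of_mem hx]
      refine Finset.prod_congr rfl fun i _ => ?_
      rw [Set.indicator_of_mem (hx i trivial)]
    · rw [Set.indicator_of_notMem hx]
      simp only [Set.mem_pi, Set.mem_univ, true_implies, not_forall] at hx
      obtain ⟨i, hi⟩ := hx
      exact (Finset.prod_eq_zero (Finset.mem_univ i) (Set.indicator_of_notMem hi _)).symm
  simp_rw [h1]
  rw [lintegral_prod_eq_prod_lintegral_of_indepFun Finset.univ
    (fun i (x : Fin n → X) => (s i).indicator p (x i))
    (iIndepFun_pi (μ := fun _ : Fin n => μ) (X := fun i => (s i).indicator p)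
      fun i => (hp.indicator (hs i)).aemeasurable)
    (fun i => (hp.indicator (hs i)).comp (measurable_pi_apply i))]
  refine Finset.prod_congr rfl fun i _ => ?_
  rw [h, withDensity_apply _ (hs i), ← lintegral_indicator (hs i)]
  exact (measurePreserving_eval (fun _ : Fin n => μ) i).lintegral_comp (hp.indicator (hs i))

/-- change of measure -/
lemma goz_change {X : Type*} [MeasurableSpace X] (μ ν : Measure X) [IsProbabilityMeasure μ]
    [IsProbabilityMeasure ν] (h : ν ≪ μ) (n : ℕ) (B : Set (Fin n → X)) (hB : MeasurableSet B)
    (t : ℝ) (hBt : ∀ x ∈ B, ∑ i, llr ν μ (x i) ≤ t) :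
    (Measure.pi fun _ : Fin n => ν) B ≤
      ENNReal.ofReal (Real.exp t) * (Measure.pi fun _ : Fin n => μ) B := by
  have hm := Measure.measurable_rnDeriv ν μ
  have hν : ν = μ.withDensity (fun x => ENNReal.ofReal (ν.rnDeriv μ x).toReal) := by
    conv_lhs => rw [← Measure.withDensity_rnDeriv_eq ν μ h]
    refine withDensity_congr_ae ?_
    filter_upwards [Measure.rnDeriv_lt_top ν μ] with x hx
    rw [ENNReal.ofReal_toReal hx.ne]
  rw [goz_pi_withDensity μ ν _ (by fun_prop) hν n, withDensity_apply _ hB]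
  calc _ ≤ ∫⁻ x in B, ENNReal.ofReal (Real.exp t) ∂(Measure.pi fun _ : Fin n => μ) := by
        refine setLIntegral_mono measurable_const fun x hx => ?_
        calc ∏ i, ENNReal.ofReal (ν.rnDeriv μ (x i)).toReal
            ≤ ∏ i, ENNReal.ofReal (Real.exp (llr ν μ (x i))) := by
              gcongr with i
              exact Real.le_exp_log _
          _ = ENNReal.ofReal (Real.exp (∑ i, llr ν μ (x i))) := by
              rw [Real.exp_sum, ENNReal.ofReal_prod_of_nonneg]
              intros; positivity
          _ ≤ _ := by gcongr; exact hBt x hx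
    _ = _ := by rw [setLIntegral_const]

lemma goz_relEntropy {X : Type*} [MeasurableSpace X] (μ ν : Measure X) [IsProbabilityMeasure μ]
    [IsProbabilityMeasure ν] : relEntropy ν μ = InformationTheory.klDiv ν μ := by
  rw [InformationTheory.klDiv_eq_lintegral_klFun, relEntropy]
  congr 1
  refine lintegral_congr fun x => ?_
  rw [InformationTheory.klFun]
  congr 1; ring

/-- the uniform measure on `Fin (m+1)` -/
noncomputable def gozUnif (m : ℕ) : Measure (Fin (m + 1)) := ((m + 1 : ℕ) : ℝ≥0∞)⁻¹ • Measure.count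

instance (m : ℕ) : IsProbabilityMeasure (gozUnif m) := ⟨by
  simp only [gozUnif, Measure.smul_apply, Measure.count_univ, smul_eq_mul]
  simp only [ENat.card_eq_coe_fintype_card, Fintype.card_fin]
  exact ENNReal.inv_mul_cancel (by simp) (by simp)⟩

/-- the empirical measure -/
noncomputable def gozEmp {X : Type*} [MeasurableSpace X] {m : ℕ} (x : Fin (m + 1) → X) :
    ProbabilityMeasure X :=
  ⟨(gozUnif m).map x, Measure.isProbabilityMeasure_map (measurable_of_finite x).aemeasurable⟩

lemma goz_integral_emp {X : Type*} [MeasurableSpace X] {m : ℕ} (x : Fin (m + 1) → X)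
    (f : X → ℝ) (hf : StronglyMeasurable f) :
    ∫ a, f a ∂(gozEmp x : Measure X) = (∑ i, f (x i)) / (m + 1 : ℕ) := by
  change ∫ a, f a ∂((gozUnif m).map x) = _
  rw [integral_map (measurable_of_finite x).aemeasurable hf.aestronglyMeasurable, gozUnif,
    integral_smul_measure, integral_count]
  rw [ENNReal.toReal_inv, ENNReal.toReal_natCast, smul_eq_mul, div_eq_inv_mul]

lemma goz_lintegral_emp {X : Type*} [MeasurableSpace X] {m : ℕ} (x : Fin (m + 1) → X)
    (f : X → ℝ≥0∞) (hf : Measurable f) :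
    ∫⁻ a, f a ∂(gozEmp x : Measure X) = ((m + 1 : ℕ) : ℝ≥0∞)⁻¹ * ∑ i, f (x i) := by
  change ∫⁻ a, f a ∂((gozUnif m).map x) = _
  rw [lintegral_map hf (measurable_of_finite x), gozUnif,
    lintegral_smul_measure, lintegral_count, tsum_fintype, smul_eq_mul]

section top
variable {X : Type*} [MetricSpace X] [TopologicalSpace.SeparableSpace X]
    [MeasurableSpace X] [BorelSpace X]

lemma goz_continuous_emp (m : ℕ) :
    Continuous (fun x : Fin (m + 1) → X => gozEmp x) := by
  rw [ProbabilityMeasure.continuous_iff_forall_continuous_integral]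
  intro f
  have : SecondCountableTopology X := UniformSpace.secondCountable_of_separable X
  simp_rw [fun x : Fin (m + 1) → X => goz_integral_emp x f f.continuous.stronglyMeasurable]
  fun_prop

/-- The filter of sets having empirical probability tending to one. -/
def gozFilter (ν : Measure X) : Filter (ProbabilityMeasure X) where
  sets := {U | Tendsto (fun m : ℕ => (Measure.pi fun _ : Fin (m + 1) => ν)
    {x | gozEmp x ∉ U}) atTop (𝓝 0)}
  univ_sets := by simp
  sets_of_superset := by
    intro U V hU hUV
    refine tendsto_of_tendsto_of_tendsto_of_le_of_le tendsto_const_nhds hU (fun _ => zero_le)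
      (fun m => measure_mono ?_)
    intro x hx h
    exact hx (hUV h)
  inter_sets := by
    intro U V hU hV
    have := hU.add hV
    rw [add_zero] at this
    refine tendsto_of_tendsto_of_tendsto_of_le_of_le tendsto_const_nhds this (fun _ => zero_le)
      (fun m => le_trans (measure_mono ?_) (measure_union_le _ _))
    intro x hx
    by_cases h : gozEmp x ∈ U
    · exact Or.inr fun habs => hx ⟨h, habs⟩
    · exact Or.inl h

lemma goz_lln (ν : ProbabilityMeasure X) (U : Set (ProbabilityMeasure X))
    (hU : U ∈ 𝓝 ν) :
    Tendsto (fun m : ℕ => (Measure.pi fun _ : Fin (m + 1) => (ν : Measure X))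
      {x | gozEmp x ∉ U}) atTop (𝓝 0) := by
  have : SecondCountableTopology X := UniformSpace.secondCountable_of_separable X
  have key : Tendsto id (gozFilter (ν : Measure X)) (𝓝 ν) := by
    rw [ProbabilityMeasure.tendsto_iff_forall_integral_tendsto]
    intro f
    rw [Metric.tendsto_nhds]
    intro ε hε
    have := (goz_wlln (ν : Measure X) f f.continuous.measurable (f.integrable (ν : Measure X)) ε hε).comp
      (tendsto_add_atTop_nat 1)
    refine this.congr fun m => ?_
    refine congrArg (Measure.pi fun _ : Fin (m + 1) => (ν : Measure X)) (Set.ext fun x => ?_)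
    simp only [Set.mem_ofPred_eq, not_lt, id, Real.dist_eq,
      goz_integral_emp x f f.continuous.stronglyMeasurable]
  exact key hU

/-- lower semicontinuity part -/
lemma goz_limit [CompleteSpace X] (μ ν : ProbabilityMeasure X) (s : ℝ≥0∞)
    (h : ∀ U ∈ 𝓝 ν, ∀ V ∈ 𝓝 μ,
      ∃ π : ProbabilityMeasure (X × X), π.map measurable_fst.aemeasurable ∈ U ∧
        π.map measurable_snd.aemeasurable ∈ V ∧
        ∫⁻ p, ENNReal.ofReal (dist p.1 p.2 ^ 2) ∂(π : Measure (X × X)) ≤ s) :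
    optCost (fun x y => dist x y ^ 2) (ν : Measure X) (μ : Measure X) ≤ s := by
  have : SecondCountableTopology X := UniformSpace.secondCountable_of_separable X
  obtain ⟨u, hu⟩ := (𝓝 ν).exists_antitone_basis
  obtain ⟨v, hv⟩ := (𝓝 μ).exists_antitone_basis
  choose π h1 h2 h3 using fun k => h (u k) (hu.mem k) (v k) (hv.mem k)
  have t1 := hu.tendsto h1
  have t2 := hv.tendsto h2
  have tight : ∀ (a : ℕ → ProbabilityMeasure X) (l : ProbabilityMeasure X),
      Tendsto a atTop (𝓝 l) → ∀ ε : ℝ≥0∞, 0 < ε → ∃ K : Set X, IsCompact K ∧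
        ∀ k, (a k : Measure X) Kᶜ ≤ ε := by
    intro a l hal ε hε
    have hc : IsCompact (closure (Set.range a)) :=
      hal.isCompact_insert_range.closure_of_subset (Set.subset_insert _ _)
    have := isTightMeasureSet_of_isCompact_closure hc
    rw [isTightMeasureSet_iff_exists_isCompact_measure_compl_le] at this
    obtain ⟨K, hK, hKb⟩ := this ε hε
    exact ⟨K, hK, fun k => hKb _ ⟨a k, ⟨k, rfl⟩, rfl⟩⟩
  have hc : IsCompact (closure (Set.range π)) := by
    apply isCompact_closure_of_isTightMeasureSet
    rw [isTightMeasureSet_iff_exists_isCompact_measure_compl_le]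
    intro ε hε
    obtain ⟨K, hK, hKb⟩ := tight _ _ t1 (ε / 2) (ENNReal.half_pos hε.ne')
    obtain ⟨L, hL, hLb⟩ := tight _ _ t2 (ε / 2) (ENNReal.half_pos hε.ne')
    refine ⟨K ×ˢ L, hK.prod hL, ?_⟩
    rintro _ ⟨_, ⟨k, rfl⟩, rfl⟩
    have e1 := hKb k
    have e2 := hLb k
    rw [ProbabilityMeasure.toMeasure_map, Measure.map_apply measurable_fst hK.isClosed.measurableSet.compl] at e1
    rw [ProbabilityMeasure.toMeasure_map, Measure.map_apply measurable_snd hL.isClosed.measurableSet.compl] at e2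
    calc _ ≤ (π k : Measure (X × X)) (Prod.fst ⁻¹' Kᶜ ∪ Prod.snd ⁻¹' Lᶜ) := by
          refine measure_mono fun p hp => ?_
          simp only [Set.mem_compl_iff, Set.mem_prod, not_and_or] at hp
          exact hp
      _ ≤ ε / 2 + ε / 2 := (measure_union_le _ _).trans (add_le_add e1 e2)
      _ = ε := ENNReal.add_halves ε
  obtain ⟨P, -, φ, hφ, hP⟩ := hc.tendsto_subseq (x := π) (fun k => subset_closure ⟨k, rfl⟩)
  have m1 := tendsto_nhds_unique (((ProbabilityMeasure.continuous_map continuous_fst).tendsto P).comp hP)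
    (t1.comp hφ.tendsto_atTop)
  have m2 := tendsto_nhds_unique (((ProbabilityMeasure.continuous_map continuous_snd).tendsto P).comp hP)
    (t2.comp hφ.tendsto_atTop)
  refine (iInf₂_le (P : Measure (X × X)) ⟨congrArg ProbabilityMeasure.toMeasure m1, congrArg ProbabilityMeasure.toMeasure m2⟩).trans ?_
  refine (lintegral_le_liminf_lintegral_of_forall_isOpen_measure_le_liminf_measure
    (f := fun p : X × X => dist p.1 p.2 ^ 2) (by fun_prop) (fun p => by positivity)
    (fun G hG => ProbabilityMeasure.le_liminf_measure_open_of_tendsto hP hG)).trans ?_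
  refine (liminf_le_liminf (Eventually.of_forall fun k => h3 (φ k))).trans ?_
  simp

/-- the key step -/
lemma goz_step (C K : ℝ) (hC : 0 < C) (hK : 0 < K)
    (μ ν : ProbabilityMeasure X)
    (hconc : ∀ n : ℕ, 1 ≤ n → ∀ A : Set (Fin n → X), MeasurableSet A →
      (1 / 2 : ℝ≥0∞) ≤ (Measure.pi fun _ : Fin n => (μ : Measure X)) A →
      ∀ r : ℝ, 0 ≤ r →
        1 - ENNReal.ofReal (K * Real.exp (-r ^ 2 / C)) ≤
          (Measure.pi fun _ : Fin n => (μ : Measure X))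
            {x | sInf ((fun y => l2ProdDist x y) '' A) ≤ r})
    (hac : (ν : Measure X) ≪ μ) (hint : Integrable (llr (ν : Measure X) μ) ν)
    (H : ℝ) (hH : ∫ x, llr (ν : Measure X) μ x ∂(ν : Measure X) = H) (hH0 : 0 ≤ H)
    (ε : ℝ) (hε : 0 < ε)
    (U : Set (ProbabilityMeasure X)) (hU : U ∈ 𝓝 ν)
    (V : Set (ProbabilityMeasure X)) (hV : V ∈ 𝓝 μ) :
    ∃ π : ProbabilityMeasure (X × X), π.map measurable_fst.aemeasurable ∈ U ∧
        π.map measurable_snd.aemeasurable ∈ V ∧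
        ∫⁻ p, ENNReal.ofReal (dist p.1 p.2 ^ 2) ∂(π : Measure (X × X)) ≤
          ENNReal.ofReal (C * (H + 3 * ε)) := by
  have : SecondCountableTopology X := UniformSpace.secondCountable_of_separable X
  obtain ⟨Uo, hUsub, hUo, hUm⟩ := mem_nhds_iff.1 hU
  obtain ⟨Vo, hVsub, hVo, hVm⟩ := mem_nhds_iff.1 hV
  have l1 := goz_lln ν Uo (hUo.mem_nhds hUm)
  have l2 := goz_lln μ Vo (hVo.mem_nhds hVm)
  have l3 := (goz_wlln (ν : Measure X) _ (measurable_llr (ν : Measure X) μ) hint ε hε).comp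
    (tendsto_add_atTop_nat 1)
  have l4 : Tendsto (fun m : ℕ => K * Real.exp (-(((m + 1 : ℕ) : ℝ) * ε))) atTop (𝓝 0) := by
    have h0 : Tendsto (fun m : ℕ => ((m + 1 : ℕ) : ℝ) * ε) atTop atTop :=
      (tendsto_natCast_atTop_atTop.comp (tendsto_add_atTop_nat 1)).atTop_mul_const hε
    have := (Real.tendsto_exp_neg_atTop_nhds_zero.comp h0).const_mul K
    simpa using this
  have q : (0 : ℝ≥0∞) < 1 / 4 := by simp
  obtain ⟨m, hm1, hm2, hm3, hm4⟩ := ((l1.eventually_lt_const q).and ((l2.eventually_lt_const q).and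
    ((l3.eventually_lt_const q).and (l4.eventually_lt_const (show (0 : ℝ) < 1 / 2 by norm_num))))).exists
  set N : ℝ := ((m + 1 : ℕ) : ℝ) with hN
  have hNpos : 0 < N := by rw [hN]; positivity
  set μn := Measure.pi fun _ : Fin (m + 1) => (μ : Measure X) with hμn
  set νn := Measure.pi fun _ : Fin (m + 1) => (ν : Measure X) with hνn
  have hcont := goz_continuous_emp (X := X) m
  -- the set A
  set A : Set (Fin (m + 1) → X) := {y | gozEmp y ∈ Vo} with hA
  have hAm : MeasurableSet A := (hVo.preimage hcont).measurableSet
  have hA2 : (1 / 2 : ℝ≥0∞) ≤ μn A := by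
    have h1 : (1 : ℝ≥0∞) ≤ μn A + 1 / 4 := by
      refine (prob_add_prob_compl (μ := μn) hAm).symm.le.trans ?_
      exact add_le_add le_rfl hm2.le
    by_contra hlt
    push Not at hlt
    have : μn A + 1 / 4 < 1 / 2 + 1 / 2 := by
      refine ENNReal.add_lt_add_of_lt_of_le (by simp) hlt ?_
      simp only [one_div]
      rw [ENNReal.inv_le_inv]
      norm_num
    rw [ENNReal.add_halves] at this
    exact absurd h1 (not_le.2 this)
  -- the set B
  set B : Set (Fin (m + 1) → X) := {x | gozEmp x ∈ Uo} ∩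
    {x | ε ≤ |(∑ i, llr (ν : Measure X) μ (x i)) / (m + 1 : ℕ)
      - ∫ a, llr (ν : Measure X) μ a ∂(ν : Measure X)|}ᶜ with hB
  have hBm : MeasurableSet B := by
    refine (hUo.preimage hcont).measurableSet.inter (MeasurableSet.compl ?_)
    apply measurableSet_le measurable_const
    fun_prop
  have hB2 : (1 / 2 : ℝ≥0∞) ≤ νn B := by
    have hc : νn Bᶜ ≤ 1 / 4 + 1 / 4 := by
      rw [hB, Set.compl_inter, compl_compl]
      exact (measure_union_le _ _).trans (add_le_add hm1.le hm3.le)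
    have h4 : (1 / 4 + 1 / 4 : ℝ≥0∞) = 1 / 2 := by
      rw [← ENNReal.toReal_eq_toReal_iff' (by simp) (by simp), ENNReal.toReal_add (by simp) (by simp)]
      simp; norm_num
    rw [h4] at hc
    have h1 : (1 : ℝ≥0∞) ≤ νn B + 1 / 2 := by
      refine (prob_add_prob_compl (μ := νn) hBm).symm.le.trans ?_
      exact add_le_add le_rfl hc
    calc (1 / 2 : ℝ≥0∞) = 1 - 1 / 2 := by simp
      _ ≤ _ := tsub_le_iff_right.2 h1
  have hBt : ∀ x ∈ B, ∑ i, llr (ν : Measure X) μ (x i) ≤ N * (H + ε) := by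
    intro x hx
    have h := hx.2
    simp only [Set.mem_compl_iff, Set.mem_ofPred_eq, not_le, hH] at h
    have habs := (abs_lt.1 h).2
    have hdiv : (∑ i, llr (ν : Measure X) μ (x i)) / N < H + ε := by rw [hN]; linarith
    rw [div_lt_iff₀ hNpos] at hdiv
    linarith
  have hch := goz_change (μ : Measure X) (ν : Measure X) hac (m + 1) B hBm _ hBt
  have hs0 : 0 ≤ N * (C * (H + 2 * ε)) := by positivity
  have hr := hconc (m + 1) (by omega) A hAm hA2 (Real.sqrt (N * (C * (H + 2 * ε))))
    (Real.sqrt_nonneg _)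
  have hexp : -Real.sqrt (N * (C * (H + 2 * ε))) ^ 2 / C = - (N * ε) - N * (H + ε) := by
    rw [Real.sq_sqrt hs0]; field_simp; ring
  rw [hexp, Real.exp_sub, ← hμn] at hr
  obtain ⟨x, hxB, hxr⟩ : ∃ x ∈ B, sInf ((fun y => l2ProdDist x y) '' A) ≤
      Real.sqrt (N * (C * (H + 2 * ε))) := by
    by_contra hno
    push Not at hno
    have hsub : {x | sInf ((fun y => l2ProdDist x y) '' A) ≤ Real.sqrt (N * (C * (H + 2 * ε)))}
        ⊆ Bᶜ := fun x hx hxB => absurd hx (not_le.2 (hno x hxB))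
    have h1 := hr.trans (measure_mono hsub)
    have h2 : μn B ≤ ENNReal.ofReal (K * (Real.exp (-(N * ε)) / Real.exp (N * (H + ε)))) := by
      rw [tsub_le_iff_right, ← prob_add_prob_compl (μ := μn) hBm, add_comm (μn B)] at h1
      exact (ENNReal.add_le_add_iff_left (measure_ne_top _ _)).1 h1
    have h3 : (1 / 2 : ℝ≥0∞) ≤ ENNReal.ofReal (K * Real.exp (-(N * ε))) := by
      refine hB2.trans (hch.trans ?_)
      refine (mul_le_mul_right h2 _).trans ?_
      rw [← ENNReal.ofReal_mul (by positivity)]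
      apply ENNReal.ofReal_le_ofReal
      apply le_of_eq
      field_simp
    have h4 : ENNReal.ofReal (K * Real.exp (-(N * ε))) < 1 / 2 := by
      rw [ENNReal.ofReal_lt_iff_lt_toReal (by positivity) (by simp)]
      simpa using hm4
    exact absurd h3 (not_le.2 h4)
  have hAne : A.Nonempty := by
    rw [Set.nonempty_iff_ne_empty]
    intro h
    rw [h] at hA2
    simp at hA2
  have hlt : sInf ((fun y => l2ProdDist x y) '' A) < Real.sqrt (N * (C * (H + 3 * ε))) := by
    refine hxr.trans_lt (Real.sqrt_lt_sqrt hs0 ?_)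
    gcongr
    norm_num
  obtain ⟨_, ⟨y, hyA, rfl⟩, hy⟩ := exists_lt_of_csInf_lt (hAne.image _) hlt
  have hsum : ∑ i, dist (x i) (y i) ^ 2 < N * (C * (H + 3 * ε)) := by
    simp only [l2ProdDist] at hy
    exact (Real.sqrt_lt_sqrt_iff (by positivity)).1 hy
  refine ⟨gozEmp fun i => (x i, y i), hUsub ?_, hVsub ?_, ?_⟩
  · have e : (gozEmp fun i => (x i, y i)).map measurable_fst.aemeasurable = gozEmp x := by
      apply Subtype.ext
      exact Measure.map_map measurable_fst (measurable_of_finite _)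
    rw [e]
    exact hxB.1
  · have e : (gozEmp fun i => (x i, y i)).map measurable_snd.aemeasurable = gozEmp y := by
      apply Subtype.ext
      exact Measure.map_map measurable_snd (measurable_of_finite _)
    rw [e]
    exact hyA
  · rw [goz_lintegral_emp _ _ (by fun_prop)]
    rw [← ENNReal.ofReal_sum_of_nonneg (fun _ _ => by positivity),
      ← ENNReal.ofReal_natCast, ← hN, ← ENNReal.ofReal_inv_of_pos hNpos,
      ← ENNReal.ofReal_mul (by positivity)]
    apply ENNReal.ofReal_le_ofReal
    rw [inv_mul_le_iff₀ hNpos]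
    exact hsum.le

end top
end Gozlan

/-- Gozlan's theorem: dimension-free Gaussian concentration implies `T₂`.  If for every
`n ≥ 1`, every Borel `A ⊆ 𝒳ⁿ` with `μⁿ(A) ≥ 1/2` satisfies
`μⁿ(Aʳ) ≥ 1 − K e^{−r²/C}` for all `r ≥ 0` (enlargement for the `ℓ²`-product metric),
then `μ` satisfies `T₂(C)`: `W₂²(ν,μ) ≤ C H(ν|μ)` for all `ν`. -/
theorem T2_of_dimension_free_gaussian_concentration
    {X : Type*} [MetricSpace X] [CompleteSpace X] [TopologicalSpace.SeparableSpace X]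
    [MeasurableSpace X] [BorelSpace X]
    (C K : ℝ) (hC : 0 < C) (hK : 0 < K)
    (μ : Measure X) [IsProbabilityMeasure μ]
    (hconc : ∀ n : ℕ, 1 ≤ n → ∀ A : Set (Fin n → X), MeasurableSet A →
      (1 / 2 : ℝ≥0∞) ≤ (Measure.pi fun _ : Fin n => μ) A →
      ∀ r : ℝ, 0 ≤ r →
        1 - ENNReal.ofReal (K * Real.exp (-r ^ 2 / C)) ≤
          (Measure.pi fun _ : Fin n => μ) {x | sInf ((fun y => l2ProdDist x y) '' A) ≤ r})
    (ν : Measure X) [IsProbabilityMeasure ν] :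
    optCost (fun x y => dist x y ^ 2) ν μ ≤ ENNReal.ofReal C * relEntropy ν μ := by
  rw [goz_relEntropy]
  by_cases htop : InformationTheory.klDiv ν μ = ∞
  · rw [htop, ENNReal.mul_top (by simpa using hC)]
    exact le_top
  obtain ⟨hac, hint⟩ := InformationTheory.klDiv_ne_top_iff.1 htop
  have hreal := InformationTheory.toReal_klDiv hac hint
  simp only [probReal_univ, add_sub_cancel_right] at hreal
  set H := (InformationTheory.klDiv ν μ).toReal with hH
  have hH0 : 0 ≤ H := ENNReal.toReal_nonneg
  rw [← ENNReal.ofReal_toReal htop, ← hH, ← ENNReal.ofReal_mul hC.le]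
  have key : ∀ ε : ℝ, 0 < ε → optCost (fun x y => dist x y ^ 2) ν μ
      ≤ ENNReal.ofReal (C * (H + 3 * ε)) := by
    intro ε hε
    exact goz_limit (X := X) (⟨μ, inferInstance⟩ : ProbabilityMeasure X)
      (⟨ν, inferInstance⟩ : ProbabilityMeasure X) _ fun U hU V hV =>
        goz_step C K hC hK (⟨μ, inferInstance⟩ : ProbabilityMeasure X)
          (⟨ν, inferInstance⟩ : ProbabilityMeasure X) hconc hac hint H hreal.symm hH0 ε hε U hU V hV
  have hlim : Filter.Tendsto (fun ε : ℝ => ENNReal.ofReal (C * (H + 3 * ε)))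
      (nhdsWithin 0 (Set.Ioi 0)) (nhds (ENNReal.ofReal (C * H))) := by
    have : Continuous fun ε : ℝ => ENNReal.ofReal (C * (H + 3 * ε)) :=
      ENNReal.continuous_ofReal.comp (by fun_prop)
    have h := this.tendsto 0
    simp only [mul_zero, add_zero] at h
    exact h.mono_left nhdsWithin_le_nhds
  refine ge_of_tendsto hlim ?_
  filter_upwards [self_mem_nhdsWithin] with ε hε using key ε hε
end
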